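/- Let n ≥ 2, let A be the Cartan matrix of type C_n, and let ι be an admissible sequence in I = {1,…,n} adapted to A. Then Ξ_ι = Tab_{C,ι}, i.e. the set of all linear forms obtained by applying finitely many operators S_k to the coordinate functions x_{j_0} coincides exactly with the set of column tableaux of type C. -/

import Mathlib

noncomputable section

/-- The coordinate linear form `x_k` (as a coefficient vector). -/
def xc (k : ℕ) : ℕ → ℚ := fun l => if l = k then 1 else 0

/-- Cartan matrix of type `A_n`. -/
def cartanA (_n : ℕ) (i j : ℕ) : ℤ :=
  if i = j then 2 else if i + 1 = j ∨ j + 1 = i then -1 else 0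

/-- Cartan matrix of type `B_n`. -/
def cartanB (n : ℕ) (i j : ℕ) : ℤ :=
  if i = j then 2
  else if i = n ∧ j = n - 1 then -2
  else if i + 1 = j ∨ j + 1 = i then -1 else 0

/-- Cartan matrix of type `C_n`. -/
def cartanC (n : ℕ) (i j : ℕ) : ℤ :=
  if i = j then 2
  else if i = n - 1 ∧ j = n then -2
  else if i + 1 = j ∨ j + 1 = i then -1 else 0

/-- Cartan matrix of type `D_n`. -/
def cartanD (n : ℕ) (i j : ℕ) : ℤ :=
  if i = j then 2
  else if (i = n - 1 ∧ j = n) ∨ (i = n ∧ j = n - 1) then 0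
  else if (i + 1 = j ∨ j + 1 = i) ∨ (i = n ∧ j = n - 2) ∨ (i = n - 2 ∧ j = n) then -1
  else 0

/-- `ι` (with positions indexed by `k ≥ 1`) takes values in `{1,…,n}`, has no two equal
consecutive entries, and every index occurs infinitely often. -/
def Admissible (n : ℕ) (ι : ℕ → ℕ) : Prop :=
  (∀ k, 1 ≤ k → 1 ≤ ι k ∧ ι k ≤ n) ∧
  (∀ k, 1 ≤ k → ι k ≠ ι (k + 1)) ∧
  (∀ i, 1 ≤ i → i ≤ n → ∀ N, ∃ k, N ≤ k ∧ ι k = i)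

/-- `k^+`: the next position after `k` carrying the same letter. -/
def kplus (ι : ℕ → ℕ) (k : ℕ) : ℕ := sInf {l | k < l ∧ ι l = ι k}

/-- `k^-`: the previous position (`≥ 1`) carrying the same letter, `0` if none. -/
def kminus (ι : ℕ → ℕ) (k : ℕ) : ℕ := sSup {l | 0 < l ∧ l < k ∧ ι l = ι k}

/-- The linear form `β_k` (with `β_0 = 0`). -/
def beta (A : ℕ → ℕ → ℤ) (ι : ℕ → ℕ) (k : ℕ) : ℕ → ℚ :=
  if k = 0 then 0
  else xc k + (∑ j ∈ Finset.Ioo k (kplus ι k), (A (ι k) (ι j) : ℚ) • xc j) + xc (kplus ι k)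

/-- The piecewise-linear operator `S_k`. -/
def Sop (A : ℕ → ℕ → ℤ) (ι : ℕ → ℕ) (k : ℕ) (φ : ℕ → ℚ) : ℕ → ℚ :=
  if 0 < φ k then φ - φ k • beta A ι k
  else φ - φ k • beta A ι (kminus ι k)

/-- Membership in `Ξ_ι`: forms obtained from some `x_{j_0}` by finitely many operators `S_k`. -/
inductive XiMem (A : ℕ → ℕ → ℤ) (ι : ℕ → ℕ) : (ℕ → ℚ) → Prop
  | base (k : ℕ) (hk : 1 ≤ k) : XiMem A ι (xc k)
  | step (k : ℕ) (hk : 1 ≤ k) (φ : ℕ → ℚ) (h : XiMem A ι φ) : XiMem A ι (Sop A ι k φ)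

/-- The set `Ξ_ι`. -/
def Xi (A : ℕ → ℕ → ℤ) (ι : ℕ → ℕ) : Set (ℕ → ℚ) := { φ | XiMem A ι φ }

/-- Forms obtained from a set `g` of generators by finitely many operators `S_k`. -/
inductive XiMemFrom (A : ℕ → ℕ → ℤ) (ι : ℕ → ℕ) (g : Set (ℕ → ℚ)) : (ℕ → ℚ) → Prop
  | base (φ : ℕ → ℚ) (h : φ ∈ g) : XiMemFrom A ι g φ
  | step (k : ℕ) (hk : 1 ≤ k) (φ : ℕ → ℚ) (h : XiMemFrom A ι g φ) :
      XiMemFrom A ι g (Sop A ι k φ)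

/-- `ι` is adapted to the Cartan matrix `A`: for `i ≠ j` with `a_{i,j} ≠ 0`, consecutive
members of the subsequence of `ι` consisting of the letters `i`, `j` are distinct. -/
def Adapted (n : ℕ) (A : ℕ → ℕ → ℤ) (ι : ℕ → ℕ) : Prop :=
  ∀ i j, 1 ≤ i → i ≤ n → 1 ≤ j → j ≤ n → i ≠ j → A i j ≠ 0 →
    ∀ k l, 1 ≤ k → k < l → (ι k = i ∨ ι k = j) → (ι l = i ∨ ι l = j) →
      (∀ m, k < m → m < l → ι m ≠ i ∧ ι m ≠ j) → ι k ≠ ι l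

/-- Position of the first occurrence of the letter `i` in `ι`. -/
def firstOcc (ι : ℕ → ℕ) (i : ℕ) : ℕ := sInf {k | 1 ≤ k ∧ ι k = i}

/-- `p_{i,j} = 1` iff the first occurrence of `i` precedes the first occurrence of `j`. -/
def pval (ι : ℕ → ℕ) (i j : ℕ) : ℕ := if firstOcc ι i < firstOcc ι j then 1 else 0

/-- The function `P(k)` for types A, B, C (and `P(k) = 0` for `k > n`, `k ≤ 1`). -/
def PABC (ι : ℕ → ℕ) (n k : ℕ) : ℕ :=
  if k ≤ n then ∑ t ∈ Finset.Icc 2 k, pval ι t (t - 1) else 0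

/-- The function `P(k)` for type D. -/
def PD (ι : ℕ → ℕ) (n k : ℕ) : ℕ :=
  if k = n then (∑ t ∈ Finset.Icc 2 (n - 2), pval ι t (t - 1)) + pval ι n (n - 2)
  else if k ≤ n then ∑ t ∈ Finset.Icc 2 k, pval ι t (t - 1) else 0

/-- `occPos ι j s`: the position of the `s`-th occurrence of the letter `j` in `ι`
(`0` for `s = 0`). -/
def occPos (ι : ℕ → ℕ) (j : ℕ) : ℕ → ℕ
  | 0 => 0
  | s + 1 => sInf {k | occPos ι j s < k ∧ ι k = j}

/-- The double-indexed coordinate form `x_{s,j}`, with the conventions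
`x_{s,0} = x_{s,n+1} = 0` and `x_{s,j} = 0` for `s ≤ 0`. -/
def xsj (ι : ℕ → ℕ) (n : ℕ) (s : ℤ) (j : ℕ) : ℕ → ℚ :=
  if 1 ≤ s ∧ 1 ≤ j ∧ j ≤ n then xc (occPos ι j s.toNat) else 0

/-- The double-indexed form `β_{s,j}`. -/
def betasj (A : ℕ → ℕ → ℤ) (ι : ℕ → ℕ) (s : ℤ) (j : ℕ) : ℕ → ℚ :=
  beta A ι (occPos ι j s.toNat)

/-- The double-indexed operator `S_{m,j}`. -/
def Ssj (A : ℕ → ℕ → ℤ) (ι : ℕ → ℕ) (m j : ℕ) (φ : ℕ → ℚ) : ℕ → ℚ :=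
  Sop A ι (occPos ι j m) φ

/- Entries of the ordered sets `J_X` are encoded as natural numbers:
an unbarred entry `j ∈ {1,…,n}` is encoded as `j`, a barred entry `j̄` is
encoded as `2n+1-j` (so that `n̄ = n+1, …, 1̄ = 2n` and the total order of
`J_B = J_C` is the numerical order), and the extra symbol `ovl(n+1)` of
types C and D is encoded as `0`. -/

/-- The box of type A. -/
def boxA (ι : ℕ → ℕ) (n : ℕ) (s : ℤ) (j : ℕ) : ℕ → ℚ :=
  xsj ι n (s + (PABC ι n j : ℤ)) j - xsj ι n (s + (PABC ι n (j - 1) : ℤ) + 1) (j - 1)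

/-- The box of type B. -/
def boxB (ι : ℕ → ℕ) (n : ℕ) (s : ℤ) (e : ℕ) : ℕ → ℚ :=
  if e ≤ n then
    xsj ι n (s + (PABC ι n e : ℤ)) e - xsj ι n (s + (PABC ι n (e - 1) : ℤ) + 1) (e - 1)
  else
    xsj ι n (s + (PABC ι n (2 * n - e) : ℤ) + (n : ℤ) - ((2 * n + 1 - e : ℕ) : ℤ) + 1)
        (2 * n - e)
      - xsj ι n (s + (PABC ι n (2 * n + 1 - e) : ℤ) + (n : ℤ) - ((2 * n + 1 - e : ℕ) : ℤ) + 1)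
          (2 * n + 1 - e)

/-- The box of type C (`ovl(n+1)` encoded as `0`). -/
def boxC (ι : ℕ → ℕ) (n : ℕ) (s : ℤ) (e : ℕ) : ℕ → ℚ :=
  if e = 0 then xsj ι n (s + (PABC ι n n : ℤ)) n
  else if e < n then
    xsj ι n (s + (PABC ι n e : ℤ)) e - xsj ι n (s + (PABC ι n (e - 1) : ℤ) + 1) (e - 1)
  else if e = n then
    (2 : ℚ) • xsj ι n (s + (PABC ι n n : ℤ)) n
      - xsj ι n (s + (PABC ι n (n - 1) : ℤ) + 1) (n - 1)
  else if e = n + 1 then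
    xsj ι n (s + (PABC ι n (n - 1) : ℤ) + 1) (n - 1)
      - (2 : ℚ) • xsj ι n (s + (PABC ι n n : ℤ) + 1) n
  else
    xsj ι n (s + (PABC ι n (2 * n - e) : ℤ) + (n : ℤ) - ((2 * n + 1 - e : ℕ) : ℤ) + 1)
        (2 * n - e)
      - xsj ι n (s + (PABC ι n (2 * n + 1 - e) : ℤ) + (n : ℤ) - ((2 * n + 1 - e : ℕ) : ℤ) + 1)
          (2 * n + 1 - e)

/-- The box of type D (`ovl(n+1)` encoded as `0`, `n̄` as `n+1`, `ovl(n-1)` as `n+2`). -/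
def boxD (ι : ℕ → ℕ) (n : ℕ) (s : ℤ) (e : ℕ) : ℕ → ℚ :=
  if e = 0 then xsj ι n (s + (PD ι n n : ℤ)) n
  else if e ≤ n - 2 then
    xsj ι n (s + (PD ι n e : ℤ)) e - xsj ι n (s + (PD ι n (e - 1) : ℤ) + 1) (e - 1)
  else if e = n - 1 then
    xsj ι n (s + (PD ι n (n - 1) : ℤ)) (n - 1) + xsj ι n (s + (PD ι n n : ℤ)) n
      - xsj ι n (s + (PD ι n (n - 2) : ℤ) + 1) (n - 2)
  else if e = n then
    xsj ι n (s + (PD ι n n : ℤ)) n - xsj ι n (s + (PD ι n (n - 1) : ℤ) + 1) (n - 1)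
  else if e = n + 1 then
    xsj ι n (s + (PD ι n (n - 1) : ℤ)) (n - 1) - xsj ι n (s + (PD ι n n : ℤ) + 1) n
  else if e = n + 2 then
    xsj ι n (s + (PD ι n (n - 2) : ℤ) + 1) (n - 2)
      - xsj ι n (s + (PD ι n (n - 1) : ℤ) + 1) (n - 1)
      - xsj ι n (s + (PD ι n n : ℤ) + 1) n
  else
    xsj ι n (s + (PD ι n (2 * n - e) : ℤ) + (n : ℤ) - ((2 * n + 1 - e : ℕ) : ℤ)) (2 * n - e)
      - xsj ι n (s + (PD ι n (2 * n + 1 - e) : ℤ) + (n : ℤ) - ((2 * n + 1 - e : ℕ) : ℤ))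
          (2 * n + 1 - e)

/-- The column tableau `[j_1,…,j_k]_s = Σ_{i=1}^k box_{s+k-i}(j_i)`. -/
def tab (box : ℤ → ℕ → ℕ → ℚ) (s : ℤ) (k : ℕ) (j : ℕ → ℕ) : ℕ → ℚ :=
  ∑ i ∈ Finset.Icc 1 k, box (s + (k : ℤ) - (i : ℤ)) (j i)

/-- The set `Tab_{A,ι}`. -/
def TabA (ι : ℕ → ℕ) (n : ℕ) : Set (ℕ → ℚ) :=
  { T | ∃ (k : ℕ) (s : ℤ) (j : ℕ → ℕ),
      1 ≤ k ∧ k ≤ n ∧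
      (∀ i, 1 ≤ i → i ≤ k → 1 ≤ j i ∧ j i ≤ n + 1) ∧
      (∀ i, 1 ≤ i → i < k → j i < j (i + 1)) ∧
      1 - (PABC ι n k : ℤ) ≤ s ∧
      T = tab (boxA ι n) s k j }

/-- `|·|` on encoded entries of `J_B = J_C`. -/
def absJ (n e : ℕ) : ℕ := if e ≤ n then e else 2 * n + 1 - e

/-- The set `Tab_{B,ι}`. -/
def TabB (ι : ℕ → ℕ) (n : ℕ) : Set (ℕ → ℚ) :=
  { T | ∃ (k : ℕ) (s : ℤ) (j : ℕ → ℕ),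
      1 ≤ k ∧ k ≤ n ∧
      (∀ i, 1 ≤ i → i ≤ k → 1 ≤ j i ∧ j i ≤ 2 * n) ∧
      (∀ i, 1 ≤ i → i < k → j i < j (i + 1)) ∧
      (k = n → ∀ l m, 1 ≤ l → l < m → m ≤ k → absJ n (j l) ≠ absJ n (j m)) ∧
      1 - (PABC ι n k : ℤ) ≤ s ∧
      T = tab (boxB ι n) s k j }

/-- Defining conditions of `Tab_{C,ι}` on the data `(k,s,j)`. -/
def TabCcond (ι : ℕ → ℕ) (n : ℕ) (k : ℕ) (s : ℤ) (j : ℕ → ℕ) : Prop :=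
  (1 ≤ k ∧ k ≤ n - 1 ∧
    (∀ i, 1 ≤ i → i ≤ k → 1 ≤ j i ∧ j i ≤ 2 * n) ∧
    (∀ i, 1 ≤ i → i < k → j i < j (i + 1)) ∧
    1 - (PABC ι n k : ℤ) ≤ s)
  ∨
  (j 1 = 0 ∧ 1 ≤ k ∧ k ≤ n + 1 ∧
    (∀ i, 2 ≤ i → i ≤ k → n + 1 ≤ j i ∧ j i ≤ 2 * n) ∧
    (∀ i, 2 ≤ i → i < k → j i < j (i + 1)) ∧
    1 - (PABC ι n n : ℤ) ≤ s)

/-- The set `Tab_{C,ι}`. -/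
def TabC (ι : ℕ → ℕ) (n : ℕ) : Set (ℕ → ℚ) :=
  { T | ∃ k s j, TabCcond ι n k s j ∧ T = tab (boxC ι n) s k j }

/-- The partial order on (encoded) `J_D`: `a ≤ b` iff `a = b`, or `a < b` numerically and
`(a,b)` is not the incomparable pair `(n, n̄)`. -/
def leD (n a b : ℕ) : Prop := a = b ∨ (a < b ∧ ¬(a = n ∧ b = n + 1))

/-- Defining conditions of `Tab_{D,ι}` on the data `(k,s,j)`. -/
def TabDcond (ι : ℕ → ℕ) (n : ℕ) (k : ℕ) (s : ℤ) (j : ℕ → ℕ) : Prop :=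
  (1 ≤ k ∧ k ≤ n - 2 ∧
    (∀ i, 1 ≤ i → i ≤ k → 1 ≤ j i ∧ j i ≤ 2 * n) ∧
    (∀ i, 1 ≤ i → i < k → ¬ leD n (j (i + 1)) (j i)) ∧
    1 - (PD ι n k : ℤ) ≤ s)
  ∨
  (j 1 = 0 ∧ 1 ≤ k ∧ k ≤ n + 1 ∧
    (∀ i, 2 ≤ i → i ≤ k → n + 1 ≤ j i ∧ j i ≤ 2 * n) ∧
    (∀ i, 2 ≤ i → i < k → j i < j (i + 1)) ∧
    (k % 2 = 0 → 1 - (PD ι n (n - 1) : ℤ) ≤ s) ∧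
    (k % 2 = 1 → 1 - (PD ι n n : ℤ) ≤ s))

/-- The set `Tab_{D,ι}`. -/
def TabD (ι : ℕ → ℕ) (n : ℕ) : Set (ℕ → ℚ) :=
  { T | ∃ k s j, TabDcond ι n k s j ∧ T = tab (boxD ι n) s k j }

end


/-! ### Occurrences of letters -/

theorem occ_set_nonempty {n : ℕ} {ι : ℕ → ℕ} (hadm : Admissible n ι) {j : ℕ} (h1 : 1 ≤ j)
    (h2 : j ≤ n) (r : ℕ) : {k | occPos ι j r < k ∧ ι k = j}.Nonempty := by
  obtain ⟨k, hk, hk'⟩ := hadm.2.2 j h1 h2 (occPos ι j r + 1)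
  exact ⟨k, by omega, hk'⟩

theorem occ_lt_succ {n : ℕ} {ι : ℕ → ℕ} (hadm : Admissible n ι) {j : ℕ} (h1 : 1 ≤ j)
    (h2 : j ≤ n) (r : ℕ) : occPos ι j r < occPos ι j (r + 1) :=
  (Nat.sInf_mem (occ_set_nonempty hadm h1 h2 r)).1

theorem occ_letter {n : ℕ} {ι : ℕ → ℕ} (hadm : Admissible n ι) {j : ℕ} (h1 : 1 ≤ j)
    (h2 : j ≤ n) (r : ℕ) : ι (occPos ι j (r + 1)) = j :=
  (Nat.sInf_mem (occ_set_nonempty hadm h1 h2 r)).2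

theorem occ_min {ι : ℕ → ℕ} {j : ℕ} {r k : ℕ} (h : occPos ι j r < k) (hk : ι k = j) :
    occPos ι j (r + 1) ≤ k :=
  Nat.sInf_le (⟨h, hk⟩ : k ∈ {k | occPos ι j r < k ∧ ι k = j})

theorem occ_mono {n : ℕ} {ι : ℕ → ℕ} (hadm : Admissible n ι) {j : ℕ} (h1 : 1 ≤ j)
    (h2 : j ≤ n) : StrictMono (occPos ι j) :=
  strictMono_nat_of_lt_succ (occ_lt_succ hadm h1 h2)

theorem occ_surj {n : ℕ} {ι : ℕ → ℕ} (hadm : Admissible n ι) {j : ℕ} (h1 : 1 ≤ j)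
    (h2 : j ≤ n) {k : ℕ} (hk1 : 1 ≤ k) (hk : ι k = j) : ∃ r, k = occPos ι j (r + 1) := by
  by_contra hcon
  push Not at hcon
  have key : ∀ r, occPos ι j r < k := by
    intro r
    induction r with
    | zero => exact hk1
    | succ r ih => exact lt_of_le_of_ne (occ_min ih hk) (Ne.symm (hcon r))
  have := (occ_mono hadm h1 h2).le_apply (x := k)
  exact absurd (key k) (by omega)

theorem occ_inj {n : ℕ} {ι : ℕ → ℕ} (hadm : Admissible n ι) {j j' : ℕ} (h1 : 1 ≤ j)
    (h2 : j ≤ n) (h1' : 1 ≤ j') (h2' : j' ≤ n) {r r' : ℕ}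
    (h : occPos ι j (r + 1) = occPos ι j' (r' + 1)) : j = j' ∧ r = r' := by
  have hj : j = j' := by
    rw [← occ_letter hadm h1 h2 r, h, occ_letter hadm h1' h2' r']
  subst hj
  have := (occ_mono hadm h1 h2).injective h
  exact ⟨rfl, by omega⟩

theorem kplus_occ {n : ℕ} {ι : ℕ → ℕ} (hadm : Admissible n ι) {j : ℕ} (h1 : 1 ≤ j)
    (h2 : j ≤ n) (r : ℕ) : kplus ι (occPos ι j (r + 1)) = occPos ι j (r + 2) := by
  unfold kplus
  rw [occ_letter hadm h1 h2]
  rfl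

theorem kminus_occ {n : ℕ} {ι : ℕ → ℕ} (hadm : Admissible n ι) {j : ℕ} (h1 : 1 ≤ j)
    (h2 : j ≤ n) (r : ℕ) : kminus ι (occPos ι j (r + 1)) = occPos ι j r := by
  unfold kminus
  rw [occ_letter hadm h1 h2]
  have hle : ∀ l ∈ {l | 0 < l ∧ l < occPos ι j (r + 1) ∧ ι l = j}, l ≤ occPos ι j r := by
    rintro l ⟨_, hl2, hl3⟩
    by_contra hcon
    have := occ_min (not_le.mp hcon) hl3
    omega
  cases r with
  | zero =>
    have : {l | 0 < l ∧ l < occPos ι j (0 + 1) ∧ ι l = j} = ∅ := by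
      ext l
      simp only [Set.mem_ofPred_eq, Set.mem_empty_iff_false, iff_false]
      intro hl
      have h0 := hle l hl
      have h3 : occPos ι j 0 = 0 := rfl
      have := hl.1
      omega
    rw [this]
    simp [occPos]
  | succ r =>
    apply le_antisymm
    · exact csSup_le ⟨occPos ι j (r + 1), by
        refine ⟨?_, occ_lt_succ hadm h1 h2 _, occ_letter hadm h1 h2 r⟩
        exact lt_of_le_of_lt (Nat.zero_le _) (occ_lt_succ hadm h1 h2 r)⟩ hle
    · apply le_csSup ⟨_, hle⟩
      refine ⟨?_, occ_lt_succ hadm h1 h2 _, occ_letter hadm h1 h2 r⟩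
      exact lt_of_le_of_lt (Nat.zero_le _) (occ_lt_succ hadm h1 h2 r)

theorem firstOcc_eq (ι : ℕ → ℕ) (j : ℕ) : firstOcc ι j = occPos ι j 1 := rfl

theorem occ_between {n : ℕ} {ι : ℕ → ℕ} (hadm : Admissible n ι)
    (hadap : Adapted n (cartanC n) ι) {i j : ℕ} (h1 : 1 ≤ i)
    (h2 : i ≤ n) (h1' : 1 ≤ j) (h2' : j ≤ n) (hij : i + 1 = j ∨ j + 1 = i) (r : ℕ) :
    ∃ s, occPos ι i (r + 1) < occPos ι j (s + 1) ∧ occPos ι j (s + 1) < occPos ι i (r + 2) := by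
  by_contra hcon
  push Not at hcon
  have hA : cartanC n i j ≠ 0 := by
    unfold cartanC
    split_ifs <;> simp
  refine hadap i j h1 h2 h1' h2' (by omega) hA (occPos ι i (r + 1)) (occPos ι i (r + 2)) ?_
    (occ_lt_succ hadm h1 h2 _) (Or.inl (occ_letter hadm h1 h2 _))
    (Or.inl (occ_letter hadm h1 h2 _)) ?_ ?_
  · have := occ_lt_succ hadm h1 h2 r
    omega
  · intro m hm1 hm2
    constructor
    · intro hm
      have : occPos ι i (r + 2) ≤ m := occ_min hm1 hm
      omega
    · intro hm
      obtain ⟨s, hs⟩ := occ_surj hadm h1' h2' (by omega) hm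
      have := hcon s (by omega)
      omega
  · rw [occ_letter hadm h1 h2, occ_letter hadm h1 h2]

theorem occ_interleave {n : ℕ} {ι : ℕ → ℕ} (hadm : Admissible n ι)
    (hadap : Adapted n (cartanC n) ι) {i j : ℕ} (h1 : 1 ≤ i)
    (h2 : i ≤ n) (h1' : 1 ≤ j) (h2' : j ≤ n) (hij : i + 1 = j ∨ j + 1 = i)
    (hf : firstOcc ι i < firstOcc ι j) (r : ℕ) :
    occPos ι i (r + 1) < occPos ι j (r + 1) ∧ occPos ι j (r + 1) < occPos ι i (r + 2) := by
  have Mi := occ_mono hadm h1 h2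
  have Mj := occ_mono hadm h1' h2'
  induction r with
  | zero =>
    refine ⟨hf, ?_⟩
    obtain ⟨s, hs1, hs2⟩ := occ_between hadm hadap h1 h2 h1' h2' hij 0
    exact lt_of_le_of_lt (Mj.monotone (by omega)) hs2
  | succ r ih =>
    constructor
    · obtain ⟨s, hs1, hs2⟩ := occ_between hadm hadap h1' h2' h1 h2 (by omega) r
      have : r + 1 < s + 1 := Mi.lt_iff_lt.mp (by omega)
      exact lt_of_le_of_lt (Mi.monotone (by omega)) hs2
    · obtain ⟨s, hs1, hs2⟩ := occ_between hadm hadap h1 h2 h1' h2' hij (r + 1)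
      have : r + 1 < s + 1 := Mj.lt_iff_lt.mp (by
        have : r + 1 + 1 = r + 2 := rfl
        rw [this] at hs1
        omega)
      exact lt_of_le_of_lt (Mj.monotone (by omega)) hs2

theorem firstOcc_ne {n : ℕ} {ι : ℕ → ℕ} (hadm : Admissible n ι) {i j : ℕ} (h1 : 1 ≤ i)
    (h2 : i ≤ n) (h1' : 1 ≤ j) (h2' : j ≤ n) (hij : i ≠ j) : firstOcc ι i ≠ firstOcc ι j := by
  intro h
  rw [firstOcc_eq, firstOcc_eq] at h
  exact hij (occ_inj hadm h1 h2 h1' h2' h).1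

theorem occ_pval {n : ℕ} {ι : ℕ → ℕ} (hadm : Admissible n ι)
    (hadap : Adapted n (cartanC n) ι) {i j : ℕ} (h1 : 1 ≤ i)
    (h2 : i ≤ n) (h1' : 1 ≤ j) (h2' : j ≤ n) (hij : i + 1 = j ∨ j + 1 = i) (r : ℕ) :
    occPos ι i (r + 1) < occPos ι j (r + 1 + pval ι j i) ∧
      occPos ι j (r + 1 + pval ι j i) < occPos ι i (r + 2) := by
  unfold pval
  split_ifs with h
  · have e1 := occ_interleave hadm hadap h1' h2' h1 h2 (by omega) h r
    have e2 := occ_interleave hadm hadap h1' h2' h1 h2 (by omega) h (r + 1)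
    exact ⟨e1.2, e2.1⟩
  · have := firstOcc_ne hadm h1 h2 h1' h2' (by omega)
    exact occ_interleave hadm hadap h1 h2 h1' h2' hij (by omega) r

theorem occ_sum {n : ℕ} {ι : ℕ → ℕ} (hadm : Admissible n ι)
    (hadap : Adapted n (cartanC n) ι) {i j : ℕ} (h1 : 1 ≤ i)
    (h2 : i ≤ n) (h1' : 1 ≤ j) (h2' : j ≤ n) (hij : i + 1 = j ∨ j + 1 = i) (r : ℕ) :
    ∑ m ∈ Finset.Ioo (occPos ι i (r + 1)) (occPos ι i (r + 2)),
      (if ι m = j then xc m else 0) = xc (occPos ι j (r + 1 + pval ι j i)) := by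
  obtain ⟨e1, e2⟩ := occ_pval hadm hadap h1 h2 h1' h2' hij r
  have hl : ι (occPos ι j (r + 1 + pval ι j i)) = j := by
    have : r + 1 + pval ι j i = (r + pval ι j i) + 1 := by omega
    rw [this]
    exact occ_letter hadm h1' h2' _
  rw [Finset.sum_eq_single (occPos ι j (r + 1 + pval ι j i))]
  · rw [if_pos hl]
  · intro m hm hne
    rw [Finset.mem_Ioo] at hm
    rw [if_neg]
    intro hmj
    obtain ⟨s, hs⟩ := occ_surj hadm h1' h2' (by omega) hmj
    have Mi := occ_mono hadm h1 h2
    have Mj := occ_mono hadm h1' h2'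
    have e3 : r + 1 + pval ι j i = (r + pval ι j i) + 1 := by omega
    rw [e3] at e1 e2 hne
    rcases Nat.lt_trichotomy s (r + pval ι j i) with h | h | h
    · obtain ⟨q, hq1, hq2⟩ := occ_between hadm hadap h1' h2' h1 h2 (by omega) s
      have a1 := Mj.monotone (show s + 2 ≤ (r + pval ι j i) + 1 by omega)
      have a2 : r + 1 < q + 1 := Mi.lt_iff_lt.mp (by omega)
      have a3 : q + 1 < r + 2 := Mi.lt_iff_lt.mp (by omega)
      omega
    · rw [hs, h] at hne
      exact hne rfl
    · obtain ⟨q, hq1, hq2⟩ := occ_between hadm hadap h1' h2' h1 h2 (by omega) (r + pval ι j i)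
      have a1 := Mj.monotone (show (r + pval ι j i) + 2 ≤ s + 1 by omega)
      have a2 : r + 1 < q + 1 := Mi.lt_iff_lt.mp (by omega)
      have a3 : q + 1 < r + 2 := Mi.lt_iff_lt.mp (by omega)
      omega
  · intro h
    exact absurd (Finset.mem_Ioo.mpr ⟨e1, e2⟩) h

/-! ### The shifted coordinates -/

/-- Shifted coordinates `y_{t,j} = x_{t+P(j),j}`. -/
noncomputable def Yc (ι : ℕ → ℕ) (n : ℕ) (t : ℤ) (j : ℕ) : ℕ → ℚ :=
  xsj ι n (t + (PABC ι n j : ℤ)) j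

/-- The form `β` in shifted coordinates (without truncation). -/
noncomputable def Bf (ι : ℕ → ℕ) (n : ℕ) (t : ℤ) (j : ℕ) : ℕ → ℚ :=
  Yc ι n t j + Yc ι n (t + 1) j - Yc ι n (t + 1) (j - 1)
    + (cartanC n j (j + 1) : ℚ) • Yc ι n t (j + 1)

theorem Yc_zero (ι : ℕ → ℕ) (n : ℕ) (t : ℤ) : Yc ι n t 0 = 0 := by
  simp [Yc, xsj]

theorem Yc_big (ι : ℕ → ℕ) (n : ℕ) (t : ℤ) : Yc ι n t (n + 1) = 0 := by
  simp [Yc, xsj]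

theorem pval_le (ι : ℕ → ℕ) (i j : ℕ) : pval ι i j ≤ 1 := by
  unfold pval
  split_ifs <;> omega

theorem P_succ (ι : ℕ → ℕ) {n j : ℕ} (h1 : 1 ≤ j) (h2 : j + 1 ≤ n) :
    PABC ι n (j + 1) = PABC ι n j + pval ι (j + 1) j := by
  unfold PABC
  rw [if_pos h2, if_pos (by omega), Finset.sum_Icc_succ_top (by omega)]
  simp

theorem P_one (ι : ℕ → ℕ) (n : ℕ) : PABC ι n 1 = 0 := by
  unfold PABC
  split_ifs <;> simp

theorem P_zero (ι : ℕ → ℕ) (n : ℕ) : PABC ι n 0 = 0 := by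
  simp [PABC]

theorem P_step (ι : ℕ → ℕ) {n j : ℕ} (h2 : j + 1 ≤ n) :
    PABC ι n j ≤ PABC ι n (j + 1) ∧ PABC ι n (j + 1) ≤ PABC ι n j + 1 := by
  rcases Nat.eq_zero_or_pos j with h | h
  · subst h
    rw [P_one, P_zero]
    omega
  · have := P_succ ι h h2
    have := pval_le ι (j + 1) j
    omega

theorem P_lip (ι : ℕ → ℕ) {n : ℕ} (a d : ℕ) (h : a + d ≤ n) :
    PABC ι n a ≤ PABC ι n (a + d) ∧ PABC ι n (a + d) ≤ PABC ι n a + d := by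
  induction d with
  | zero => simp
  | succ d ih =>
    have := ih (by omega)
    have := P_step ι (n := n) (j := a + d) (by omega)
    rw [← Nat.add_assoc]
    omega

theorem P_le (ι : ℕ → ℕ) {n a b : ℕ} (h : a ≤ b) (hb : b ≤ n) :
    PABC ι n a ≤ PABC ι n b ∧ PABC ι n b ≤ PABC ι n a + (b - a) := by
  have := P_lip ι (n := n) a (b - a) (by omega)
  rwa [show a + (b - a) = b by omega] at this

theorem pval_add {n : ℕ} {ι : ℕ → ℕ} (hadm : Admissible n ι) {i j : ℕ} (h1 : 1 ≤ i)
    (h2 : i ≤ n) (h1' : 1 ≤ j) (h2' : j ≤ n) (hij : i ≠ j) : pval ι i j + pval ι j i = 1 := by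
  have := firstOcc_ne hadm h1 h2 h1' h2' hij
  unfold pval
  split_ifs <;> omega

/-- Positions in terms of the shifted coordinates. -/
noncomputable def posc (ι : ℕ → ℕ) (n : ℕ) (t : ℤ) (j : ℕ) : ℕ :=
  occPos ι j (t + (PABC ι n j : ℤ)).toNat

theorem Yc_eval {n : ℕ} {ι : ℕ → ℕ} (hadm : Admissible n ι) {t t' : ℤ} {j j' : ℕ}
    (h1 : 1 ≤ j) (h2 : j ≤ n) (hv : 1 ≤ t + (PABC ι n j : ℤ)) (h2' : j' ≤ n) :
    Yc ι n t' j' (posc ι n t j) = if j' = j ∧ t' = t then 1 else 0 := by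
  unfold Yc xsj posc
  by_cases hc : 1 ≤ t' + (PABC ι n j' : ℤ) ∧ 1 ≤ j' ∧ j' ≤ n
  · rw [if_pos hc]
    obtain ⟨r, hr⟩ := Nat.exists_eq_add_of_le' (show 1 ≤ (t + (PABC ι n j : ℤ)).toNat by omega)
    obtain ⟨r', hr'⟩ :=
      Nat.exists_eq_add_of_le' (show 1 ≤ (t' + (PABC ι n j' : ℤ)).toNat by omega)
    unfold xc
    congr 1
    rw [hr, hr', eq_iff_iff]
    constructor
    · intro h
      obtain ⟨ha, hb⟩ := occ_inj hadm h1 h2 hc.2.1 hc.2.2 h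
      subst ha
      exact ⟨rfl, by omega⟩
    · rintro ⟨ha, hb⟩
      subst ha
      rw [show r = r' by omega]
  · rw [if_neg hc, if_neg]
    · rfl
    · rintro ⟨rfl, rfl⟩
      exact hc ⟨hv, h1, h2⟩

theorem beta_posc {n : ℕ} (hn : 2 ≤ n) {ι : ℕ → ℕ} (hadm : Admissible n ι)
    (hadap : Adapted n (cartanC n) ι) {t : ℤ} {j : ℕ}
    (h1 : 1 ≤ j) (h2 : j ≤ n) (hv : 1 ≤ t + (PABC ι n j : ℤ)) :
    beta (cartanC n) ι (posc ι n t j) = Bf ι n t j := by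
  obtain ⟨r, hr⟩ := Nat.exists_eq_add_of_le' (show 1 ≤ (t + (PABC ι n j : ℤ)).toNat by omega)
  unfold posc
  have hpos : occPos ι j (r + 1) ≠ 0 := by
    have := occ_lt_succ hadm h1 h2 r
    omega
  rw [hr]
  unfold beta
  rw [if_neg hpos, kplus_occ hadm h1 h2, occ_letter hadm h1 h2]
  have y1 : Yc ι n t j = xc (occPos ι j (r + 1)) := by
    unfold Yc xsj
    rw [if_pos ⟨hv, h1, h2⟩, hr]
  have y2 : Yc ι n (t + 1) j = xc (occPos ι j (r + 2)) := by
    unfold Yc xsj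
    rw [if_pos ⟨by omega, h1, h2⟩]
    congr 2
    omega
  have hsplit : ∀ m ∈ Finset.Ioo (occPos ι j (r + 1)) (occPos ι j (r + 2)),
      (cartanC n j (ι m) : ℚ) • xc m = - (if ι m = j - 1 then xc m else 0)
        + (cartanC n j (j + 1) : ℚ) • (if ι m = j + 1 then xc m else 0) := by
    intro m hm
    rw [Finset.mem_Ioo] at hm
    have hne : ι m ≠ j := by
      intro h
      have : occPos ι j (r + 2) ≤ m := occ_min hm.1 h
      omega
    by_cases ha : ι m = j - 1
    · rw [if_pos ha, if_neg (by omega), ha]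
      have : cartanC n j (j - 1) = -1 := by
        unfold cartanC
        rw [if_neg (by omega), if_neg (by omega), if_pos (by omega)]
      rw [this]
      simp
    · by_cases hb : ι m = j + 1
      · rw [if_neg ha, if_pos hb, hb]
        simp
      · rw [if_neg ha, if_neg hb]
        have : cartanC n j (ι m) = 0 := by
          unfold cartanC
          rw [if_neg (by omega), if_neg (by omega), if_neg (by omega)]
        rw [this]
        simp
  have z1 : ∑ m ∈ Finset.Ioo (occPos ι j (r + 1)) (occPos ι j (r + 2)),
      (if ι m = j - 1 then xc m else 0) = Yc ι n (t + 1) (j - 1) := by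
    by_cases hj : j = 1
    · subst hj
      rw [Yc_zero]
      apply Finset.sum_eq_zero
      intro m hm
      rw [Finset.mem_Ioo] at hm
      have := (hadm.1 m (by omega)).1
      rw [if_neg (by omega)]
    · rw [occ_sum hadm hadap h1 h2 (by omega) (by omega) (by omega)]
      have e1 := P_succ ι (n := n) (j := j - 1) (by omega) (by omega)
      have e2 := pval_add hadm h1 h2 (j := j - 1) (by omega) (by omega) (by omega)
      rw [show j - 1 + 1 = j by omega] at e1
      unfold Yc xsj
      rw [if_pos ⟨by omega, by omega, by omega⟩]
      congr 2
      omega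
  have z2 : ∑ m ∈ Finset.Ioo (occPos ι j (r + 1)) (occPos ι j (r + 2)),
      (if ι m = j + 1 then xc m else 0) = Yc ι n t (j + 1) := by
    by_cases hj : j = n
    · subst hj
      rw [Yc_big]
      apply Finset.sum_eq_zero
      intro m hm
      rw [Finset.mem_Ioo] at hm
      have := (hadm.1 m (by omega)).2
      rw [if_neg (by omega)]
    · rw [occ_sum hadm hadap h1 h2 (by omega) (by omega) (by omega)]
      have e1 := P_succ ι (n := n) (j := j) (by omega) (by omega)
      unfold Yc xsj
      rw [if_pos ⟨by omega, by omega, by omega⟩]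
      congr 2
      omega
  rw [Finset.sum_congr rfl hsplit, Finset.sum_add_distrib, Finset.sum_neg_distrib,
    ← Finset.smul_sum, z1, z2]
  unfold Bf
  rw [y1, y2]
  abel

theorem kminus_posc {n : ℕ} {ι : ℕ → ℕ} (hadm : Admissible n ι) {t : ℤ} {j : ℕ}
    (h1 : 1 ≤ j) (h2 : j ≤ n) (hv : 1 ≤ t + (PABC ι n j : ℤ)) :
    kminus ι (posc ι n t j) = posc ι n (t - 1) j := by
  obtain ⟨r, hr⟩ := Nat.exists_eq_add_of_le' (show 1 ≤ (t + (PABC ι n j : ℤ)).toNat by omega)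
  unfold posc
  rw [hr, kminus_occ hadm h1 h2]
  congr 1
  omega

theorem posc_surj {n : ℕ} {ι : ℕ → ℕ} (hadm : Admissible n ι) {k : ℕ} (hk : 1 ≤ k) :
    ∃ (t : ℤ) (j : ℕ), 1 ≤ j ∧ j ≤ n ∧ 1 ≤ t + (PABC ι n j : ℤ) ∧ k = posc ι n t j := by
  obtain ⟨h1, h2⟩ := hadm.1 k hk
  obtain ⟨r, hr⟩ := occ_surj hadm h1 h2 hk rfl
  refine ⟨(r : ℤ) + 1 - PABC ι n (ι k), ι k, h1, h2, by omega, ?_⟩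
  unfold posc
  rw [show ((r : ℤ) + 1 - PABC ι n (ι k) + (PABC ι n (ι k) : ℤ)).toNat = r + 1 by omega]
  exact hr

theorem posc_pos {n : ℕ} {ι : ℕ → ℕ} (hadm : Admissible n ι) {t : ℤ} {j : ℕ}
    (h1 : 1 ≤ j) (h2 : j ≤ n) (hv : 1 ≤ t + (PABC ι n j : ℤ)) : 1 ≤ posc ι n t j := by
  obtain ⟨r, hr⟩ := Nat.exists_eq_add_of_le' (show 1 ≤ (t + (PABC ι n j : ℤ)).toNat by omega)
  unfold posc
  rw [hr]
  have := occ_lt_succ hadm h1 h2 r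
  omega

theorem xc_posc {n : ℕ} {ι : ℕ → ℕ} {t : ℤ} {j : ℕ}
    (h1 : 1 ≤ j) (h2 : j ≤ n) (hv : 1 ≤ t + (PABC ι n j : ℤ)) :
    xc (posc ι n t j) = Yc ι n t j := by
  unfold Yc xsj posc
  rw [if_pos ⟨hv, h1, h2⟩]

/-- Positive case of `S`. -/
theorem Sop_pos {n : ℕ} (hn : 2 ≤ n) {ι : ℕ → ℕ} (hadm : Admissible n ι)
    (hadap : Adapted n (cartanC n) ι) {t : ℤ} {j : ℕ}
    (h1 : 1 ≤ j) (h2 : j ≤ n) (hv : 1 ≤ t + (PABC ι n j : ℤ)) {φ : ℕ → ℚ} {c : ℚ}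
    (hc : φ (posc ι n t j) = c) (hc0 : 0 < c) :
    Sop (cartanC n) ι (posc ι n t j) φ = φ - c • Bf ι n t j := by
  unfold Sop
  rw [hc, if_pos hc0, beta_posc hn hadm hadap h1 h2 hv]

/-- Zero case of `S`. -/
theorem Sop_zero {n : ℕ} {ι : ℕ → ℕ} {k : ℕ} {φ : ℕ → ℚ} (hc : φ k = 0) :
    Sop (cartanC n) ι k φ = φ := by
  unfold Sop
  simp [hc]

/-- Negative case of `S`. -/
theorem Sop_neg {n : ℕ} (hn : 2 ≤ n) {ι : ℕ → ℕ} (hadm : Admissible n ι)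
    (hadap : Adapted n (cartanC n) ι) {t : ℤ} {j : ℕ}
    (h1 : 1 ≤ j) (h2 : j ≤ n) (hv : 1 ≤ t + (PABC ι n j : ℤ)) {φ : ℕ → ℚ} {c : ℚ}
    (hc : φ (posc ι n t j) = c) (hc0 : c < 0) :
    Sop (cartanC n) ι (posc ι n t j) φ = φ ∨
    Sop (cartanC n) ι (posc ι n t j) φ = φ - c • Bf ι n (t - 1) j := by
  unfold Sop
  rw [hc, if_neg (by linarith), kminus_posc hadm h1 h2 hv]
  by_cases hv' : 1 ≤ t - 1 + (PABC ι n j : ℤ)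
  · right
    rw [beta_posc hn hadm hadap h1 h2 hv']
  · left
    have : posc ι n (t - 1) j = 0 := by
      unfold posc
      rw [show (t - 1 + (PABC ι n j : ℤ)).toNat = 0 by omega]
      rfl
    rw [this]
    simp [beta]


/-! ### Boxes in the shifted coordinates -/

theorem box_zero (ι : ℕ → ℕ) (n : ℕ) (s : ℤ) : boxC ι n s 0 = Yc ι n s n := by
  simp [boxC, Yc]

theorem box_lt (ι : ℕ → ℕ) {n : ℕ} (s : ℤ) {e : ℕ} (h1 : 1 ≤ e) (h2 : e < n) :
    boxC ι n s e = Yc ι n s e - Yc ι n (s + 1) (e - 1) := by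
  unfold boxC Yc
  rw [if_neg (by omega), if_pos h2]
  congr 2
  ring

theorem box_n (ι : ℕ → ℕ) {n : ℕ} (hn : 2 ≤ n) (s : ℤ) :
    boxC ι n s n = (2 : ℚ) • Yc ι n s n - Yc ι n (s + 1) (n - 1) := by
  unfold boxC Yc
  rw [if_neg (by omega), if_neg (by omega), if_pos rfl]
  congr 2
  ring

theorem box_n1 (ι : ℕ → ℕ) {n : ℕ} (s : ℤ) :
    boxC ι n s (n + 1) = Yc ι n (s + 1) (n - 1) - (2 : ℚ) • Yc ι n (s + 1) n := by
  unfold boxC Yc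
  rw [if_neg (by omega), if_neg (by omega), if_neg (by omega), if_pos rfl,
    show s + (PABC ι n (n - 1) : ℤ) + 1 = s + 1 + (PABC ι n (n - 1) : ℤ) by ring,
    show s + (PABC ι n n : ℤ) + 1 = s + 1 + (PABC ι n n : ℤ) by ring]

theorem box_bar (ι : ℕ → ℕ) {n : ℕ} (s : ℤ) {m : ℕ} (h1 : 1 ≤ m) (h2 : m < n) :
    boxC ι n s (2 * n + 1 - m) = Yc ι n (s + n - m + 1) (m - 1) - Yc ι n (s + n - m + 1) m := by
  unfold boxC Yc
  rw [if_neg (by omega), if_neg (by omega), if_neg (by omega), if_neg (by omega),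
    show 2 * n - (2 * n + 1 - m) = m - 1 by omega,
    show 2 * n + 1 - (2 * n + 1 - m) = m by omega,
    show s + (PABC ι n (m - 1) : ℤ) + n - (m : ℤ) + 1 = s + n - m + 1 + (PABC ι n (m - 1) : ℤ) by
      ring,
    show s + (PABC ι n m : ℤ) + n - (m : ℤ) + 1 = s + n - m + 1 + (PABC ι n m : ℤ) by ring]

theorem cartan_last {n : ℕ} (hn : 2 ≤ n) : cartanC n (n - 1) (n - 1 + 1) = -2 := by
  unfold cartanC
  rw [if_neg (by omega), if_pos (by omega)]

theorem cartan_mid {n j : ℕ} (hj : j + 1 < n) : cartanC n j (j + 1) = -1 := by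
  unfold cartanC
  rw [if_neg (by omega), if_neg (by omega), if_pos (by omega)]

theorem box_diff (ι : ℕ → ℕ) {n : ℕ} (s : ℤ) {j : ℕ} (h1 : 1 ≤ j) (h2 : j < n) :
    boxC ι n s (j + 1) = boxC ι n s j - Bf ι n s j := by
  rcases Nat.lt_or_ge (j + 1) n with h | h
  · rw [box_lt ι s h1 h2, box_lt ι s (by omega) h]
    unfold Bf
    rw [cartan_mid h]
    ext x
    simp
    ring
  · have hj : j + 1 = n := by omega
    subst hj
    rw [box_lt ι s h1 h2, box_n ι (by omega)]
    unfold Bf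
    have := cartan_last (n := j + 1) (by omega)
    simp only [Nat.add_sub_cancel] at this ⊢
    rw [this]
    ext x
    simp
    ring

theorem box_diff_bar (ι : ℕ → ℕ) {n : ℕ} (s : ℤ) {j : ℕ} (h1 : 1 ≤ j) (h2 : j < n) :
    boxC ι n s (2 * n + 1 - j) = boxC ι n s (2 * n - j) - Bf ι n (s + n - j) j := by
  rw [box_bar ι s h1 h2]
  rcases Nat.lt_or_ge (j + 1) n with h | h
  · have e1 := box_bar ι s (n := n) (m := j + 1) (by omega) h
    rw [show 2 * n + 1 - (j + 1) = 2 * n - j by omega] at e1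
    rw [e1]
    unfold Bf
    rw [cartan_mid h]
    push_cast
    rw [show s + (n : ℤ) - (j + 1) + 1 = s + n - j by ring]
    ext x
    simp
    ring
  · have hj : j + 1 = n := by omega
    subst hj
    rw [show 2 * (j + 1) - j = (j + 1) + 1 by omega, box_n1]
    unfold Bf
    have := cartan_last (n := j + 1) (by omega)
    simp only [Nat.add_sub_cancel] at this ⊢
    rw [this]
    push_cast
    rw [show s + ((j : ℤ) + 1) - j = s + 1 by ring]
    ext x
    simp
    ring

theorem box_diff_n (ι : ℕ → ℕ) {n : ℕ} (hn : 2 ≤ n) (s : ℤ) :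
    boxC ι n s (n + 1) = boxC ι n s n - (2 : ℚ) • Bf ι n s n := by
  rw [box_n ι hn, box_n1]
  unfold Bf
  rw [Yc_big]
  ext x
  simp
  ring

theorem box_diff_zero (ι : ℕ → ℕ) {n : ℕ} (s : ℤ) :
    boxC ι n (s + 1) 0 + boxC ι n s (n + 1) = boxC ι n s 0 - Bf ι n s n := by
  rw [box_zero, box_zero, box_n1]
  unfold Bf
  rw [Yc_big]
  ext x
  simp
  ring

theorem box_eval {n : ℕ} (hn : 2 ≤ n) {ι : ℕ → ℕ} (hadm : Admissible n ι) {t : ℤ} {j : ℕ}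
    (h1 : 1 ≤ j) (h2 : j ≤ n) (hv : 1 ≤ t + (PABC ι n j : ℤ)) (u : ℤ) (e : ℕ)
    (he : e ≤ 2 * n) (he0 : e = 0 → j < n) :
    boxC ι n u e (posc ι n t j) =
      (if e = j ∧ u = t then (1 : ℚ) else 0) - (if e = j + 1 ∧ u = t - 1 then 1 else 0)
      + (if e = 2 * n - j ∧ u = t - n + j then 1 else 0)
      - (if e = 2 * n + 1 - j ∧ u = t - 1 - n + j then 1 else 0) := by
  have E := fun (t' : ℤ) (j' : ℕ) (h : j' ≤ n) => Yc_eval hadm (t' := t') h1 h2 hv h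
  by_cases c0 : e = 0
  · have := he0 c0
    subst c0
    rw [box_zero, E _ _ le_rfl, if_neg (by omega), if_neg (by omega), if_neg (by omega),
      if_neg (by omega), if_neg (by omega)]
    simp
  by_cases c1 : e < n
  · rw [box_lt ι u (by omega) c1, Pi.sub_apply, E _ _ (by omega), E _ _ (by omega),
      if_neg (show ¬ (e = 2 * n - j ∧ u = t - n + j) by omega),
      if_neg (show ¬ (e = 2 * n + 1 - j ∧ u = t - 1 - n + j) by omega), add_zero, sub_zero]
    congr 2
    rw [eq_iff_iff]
    omega
  by_cases c2 : e = n
  · rw [c2, box_n ι hn, Pi.sub_apply, Pi.smul_apply, E _ _ (by omega), E _ _ (by omega),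
      if_neg (show ¬ (n = 2 * n + 1 - j ∧ u = t - 1 - n + j) by omega), sub_zero]
    split_ifs <;> first | (exfalso; omega) | norm_num
  by_cases c3 : e = n + 1
  · rw [c3, box_n1, Pi.sub_apply, Pi.smul_apply, E _ _ (by omega), E _ _ (by omega),
      if_neg (show ¬ (n + 1 = j ∧ u = t) by omega)]
    split_ifs <;> first | (exfalso; omega) | norm_num
  · obtain ⟨m, hm⟩ : ∃ m, e = 2 * n + 1 - m ∧ 1 ≤ m ∧ m < n :=
      ⟨2 * n + 1 - e, by omega, by omega, by omega⟩
    rw [hm.1, box_bar ι u hm.2.1 hm.2.2, Pi.sub_apply, E _ _ (by omega), E _ _ (by omega),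
      if_neg (show ¬ (2 * n + 1 - m = j ∧ u = t) by omega),
      if_neg (show ¬ (2 * n + 1 - m = j + 1 ∧ u = t - 1) by omega)]
    split_ifs <;> first | (exfalso; omega) | norm_num

/-! ### Columns -/

/-- The column `(k,s,f)` contains the entry `e` at shift `u`. -/
def Has (k : ℕ) (s : ℤ) (f : ℕ → ℕ) (u : ℤ) (e : ℕ) : Prop :=
  ∃ i, 1 ≤ i ∧ i ≤ k ∧ s + (k : ℤ) - (i : ℤ) = u ∧ f i = e

open Classical in
/-- Indicator of `Has`. -/
noncomputable def Hi (k : ℕ) (s : ℤ) (f : ℕ → ℕ) (u : ℤ) (e : ℕ) : ℚ :=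
  if Has k s f u e then 1 else 0

theorem Hi_pos {k : ℕ} {s : ℤ} {f : ℕ → ℕ} {u : ℤ} {e : ℕ} (h : Has k s f u e) :
    Hi k s f u e = 1 := if_pos h

theorem Hi_neg {k : ℕ} {s : ℤ} {f : ℕ → ℕ} {u : ℤ} {e : ℕ} (h : ¬ Has k s f u e) :
    Hi k s f u e = 0 := if_neg h

theorem Hi_cases (k : ℕ) (s : ℤ) (f : ℕ → ℕ) (u : ℤ) (e : ℕ) :
    (Has k s f u e ∧ Hi k s f u e = 1) ∨ (¬ Has k s f u e ∧ Hi k s f u e = 0) := by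
  by_cases h : Has k s f u e
  · exact Or.inl ⟨h, Hi_pos h⟩
  · exact Or.inr ⟨h, Hi_neg h⟩

theorem Hi_sum (k : ℕ) (s : ℤ) (f : ℕ → ℕ) (u : ℤ) (e : ℕ) :
    ∑ i ∈ Finset.Icc 1 k, (if f i = e ∧ s + (k : ℤ) - (i : ℤ) = u then (1 : ℚ) else 0)
      = Hi k s f u e := by
  by_cases h : Has k s f u e
  · rw [Hi_pos h]
    obtain ⟨i, hi1, hi2, hi3, hi4⟩ := h
    rw [Finset.sum_eq_single i]
    · rw [if_pos ⟨hi4, hi3⟩]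
    · intro b _ hb
      rw [if_neg]
      intro hc
      omega
    · intro hc
      exact absurd (Finset.mem_Icc.mpr ⟨hi1, hi2⟩) hc
  · rw [Hi_neg h]
    apply Finset.sum_eq_zero
    intro i hi
    rw [Finset.mem_Icc] at hi
    rw [if_neg]
    rintro ⟨ha, hb⟩
    exact h ⟨i, hi.1, hi.2, hb, ha⟩

theorem tab_eval {n : ℕ} (hn : 2 ≤ n) {ι : ℕ → ℕ} (hadm : Admissible n ι) {t : ℤ} {j : ℕ}
    (h1 : 1 ≤ j) (h2 : j ≤ n) (hv : 1 ≤ t + (PABC ι n j : ℤ)) (k : ℕ) (s : ℤ) (f : ℕ → ℕ)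
    (hf : ∀ i, 1 ≤ i → i ≤ k → f i ≤ 2 * n ∧ (f i = 0 → j < n)) :
    tab (boxC ι n) s k f (posc ι n t j) =
      Hi k s f t j - Hi k s f (t - 1) (j + 1) + Hi k s f (t - n + j) (2 * n - j)
        - Hi k s f (t - 1 - n + j) (2 * n + 1 - j) := by
  unfold tab
  rw [Finset.sum_apply, ← Hi_sum, ← Hi_sum, ← Hi_sum, ← Hi_sum, ← Finset.sum_sub_distrib,
    ← Finset.sum_add_distrib, ← Finset.sum_sub_distrib]
  apply Finset.sum_congr rfl
  intro i hi
  rw [Finset.mem_Icc] at hi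
  have := hf i hi.1 hi.2
  exact box_eval hn hadm h1 h2 hv _ _ this.1 this.2

theorem tab_update {ι : ℕ → ℕ} {n k : ℕ} {s : ℤ} {f : ℕ → ℕ} {i : ℕ} (h1 : 1 ≤ i) (h2 : i ≤ k)
    (e : ℕ) : tab (boxC ι n) s k (Function.update f i e) =
      tab (boxC ι n) s k f - boxC ι n (s + k - i) (f i) + boxC ι n (s + k - i) e := by
  have hi : i ∈ Finset.Icc 1 k := Finset.mem_Icc.mpr ⟨h1, h2⟩
  unfold tab
  rw [← Finset.add_sum_erase _ _ hi, ← Finset.add_sum_erase _ (fun i => boxC ι n _ (f i)) hi]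
  have : ∑ x ∈ (Finset.Icc 1 k).erase i,
      boxC ι n (s + k - x) (Function.update f i e x) =
      ∑ x ∈ (Finset.Icc 1 k).erase i, boxC ι n (s + k - x) (f x) := by
    apply Finset.sum_congr rfl
    intro x hx
    rw [Function.update_of_ne (Finset.ne_of_mem_erase hx)]
  rw [this, Function.update_self]
  abel

theorem tab_succ (box : ℤ → ℕ → ℕ → ℚ) (s : ℤ) (k : ℕ) (f : ℕ → ℕ) :
    tab box s (k + 1) f = box (s + k) (f 1) + tab box s k (fun i => f (i + 1)) := by
  unfold tab
  rw [← Finset.add_sum_Ioc_eq_sum_Icc (by omega : 1 ≤ k + 1)]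
  congr 1
  · congr 1
    push_cast
    ring
  · have : Finset.Ioc 1 (k + 1) = (Finset.Icc 1 k).image (fun i => i + 1) := by
      ext x
      simp only [Finset.mem_Ioc, Finset.mem_image, Finset.mem_Icc]
      constructor
      · intro h
        exact ⟨x - 1, by omega, by omega⟩
      · rintro ⟨a, ha, rfl⟩
        omega
    rw [this, Finset.sum_image (by intro a _ b _ h; simpa using h)]
    apply Finset.sum_congr rfl
    intro i _
    congr 1
    push_cast
    ring

theorem tab_congr (box : ℤ → ℕ → ℕ → ℚ) (s : ℤ) (k : ℕ) (f g : ℕ → ℕ)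
    (h : ∀ i, 1 ≤ i → i ≤ k → f i = g i) : tab box s k f = tab box s k g := by
  unfold tab
  apply Finset.sum_congr rfl
  intro i hi
  rw [Finset.mem_Icc] at hi
  rw [h i hi.1 hi.2]

theorem tab_id (ι : ℕ → ℕ) {n : ℕ} (s : ℤ) (k : ℕ) (hk : k < n) :
    tab (boxC ι n) s k (fun i => i) = Yc ι n s k := by
  induction k generalizing s with
  | zero => simp [tab, Yc_zero]
  | succ k ih =>
    have e : tab (boxC ι n) s (k + 1) (fun i => i)
        = tab (boxC ι n) (s + 1) k (fun i => i) + boxC ι n s (k + 1) := by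
      unfold tab
      rw [Finset.sum_Icc_succ_top (by omega)]
      congr 1
      · apply Finset.sum_congr rfl
        intro i _
        congr 1
        push_cast
        ring
      · congr 1
        ring
    rw [e, ih _ (by omega), box_lt ι s (by omega) hk]
    simp


/-! ### Moves on columns -/

theorem cond_step {ι : ℕ → ℕ} {n k : ℕ} {s : ℤ} {f : ℕ → ℕ} (h : TabCcond ι n k s f) :
    ∀ i, 1 ≤ i → i < k → f i < f (i + 1) := by
  intro i h1 h2
  rcases h with ⟨_, _, _, h4, _⟩ | ⟨h0, _, _, h3, h4, _⟩
  · exact h4 i h1 h2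
  · by_cases hi : i = 1
    · subst hi
      have := h3 2 (by omega) (by omega)
      rw [h0]
      exact lt_of_lt_of_le (by omega) this.1
    · exact h4 i (by omega) h2

theorem strict_of_step {k : ℕ} {f : ℕ → ℕ} (h : ∀ i, 1 ≤ i → i < k → f i < f (i + 1)) (i d : ℕ)
    (h1 : 1 ≤ i) (h2 : i + d ≤ k) : f i + d ≤ f (i + d) := by
  induction d with
  | zero => simp
  | succ d ih =>
    have := ih (by omega)
    have := h (i + d) (by omega) (by omega)
    change f i + (d + 1) ≤ f (i + d + 1)
    omega

theorem cond_lt {ι : ℕ → ℕ} {n k : ℕ} {s : ℤ} {f : ℕ → ℕ} (h : TabCcond ι n k s f)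
    {i i' : ℕ} (h1 : 1 ≤ i) (h2 : i < i') (h3 : i' ≤ k) : f i < f i' := by
  have := strict_of_step (cond_step h) i (i' - i) h1 (by omega)
  rw [show i + (i' - i) = i' by omega] at this
  omega

theorem cond_le {ι : ℕ → ℕ} {n k : ℕ} {s : ℤ} {f : ℕ → ℕ} (h : TabCcond ι n k s f) :
    ∀ i, 1 ≤ i → i ≤ k → f i ≤ 2 * n := by
  intro i h1 h2
  rcases h with ⟨_, _, h3, _, _⟩ | ⟨h0, _, _, h3, h4, _⟩
  · exact (h3 i h1 h2).2
  · by_cases hi : i = 1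
    · subst hi
      omega
    · exact (h3 i (by omega) h2).2

theorem cond_ge {ι : ℕ → ℕ} {n k : ℕ} {s : ℤ} {f : ℕ → ℕ} (h : TabCcond ι n k s f)
    (h0 : f 1 ≠ 0) : ∀ i, 1 ≤ i → i ≤ k → 1 ≤ f i := by
  intro i h1 h2
  rcases h with ⟨_, _, h3, _, _⟩ | ⟨h0', _⟩
  · exact (h3 i h1 h2).1
  · exact absurd h0' h0

theorem Has_order {ι : ℕ → ℕ} {n k : ℕ} {s : ℤ} {f : ℕ → ℕ} (h : TabCcond ι n k s f)
    {u u' : ℤ} {e e' : ℕ} (h1 : Has k s f u e) (h2 : Has k s f u' e') (hu : u' < u) : e < e' := by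
  obtain ⟨i, hi1, hi2, hi3, rfl⟩ := h1
  obtain ⟨i', hi1', hi2', hi3', rfl⟩ := h2
  exact cond_lt h hi1 (by omega) hi2'

theorem Has_unique {k : ℕ} {s : ℤ} {f : ℕ → ℕ}
    {u : ℤ} {e e' : ℕ} (h1 : Has k s f u e) (h2 : Has k s f u e') : e = e' := by
  obtain ⟨i, hi1, hi2, hi3, rfl⟩ := h1
  obtain ⟨i', hi1', hi2', hi3', rfl⟩ := h2
  rw [show i = i' by omega]

theorem Has_update {k : ℕ} {s : ℤ} {f : ℕ → ℕ} {i : ℕ} {e' : ℕ} {u : ℤ} {e : ℕ}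
    (hu : u ≠ s + k - i) : Has k s (Function.update f i e') u e ↔ Has k s f u e := by
  constructor
  · rintro ⟨a, h1, h2, h3, h4⟩
    rw [Function.update_of_ne (by rintro rfl; exact hu h3.symm)] at h4
    exact ⟨a, h1, h2, h3, h4⟩
  · rintro ⟨a, h1, h2, h3, h4⟩
    refine ⟨a, h1, h2, h3, ?_⟩
    rw [Function.update_of_ne (by rintro rfl; exact hu h3.symm)]
    exact h4

theorem Has_update_self {k : ℕ} {s : ℤ} {f : ℕ → ℕ} {i : ℕ} {e' : ℕ}
    (h1 : 1 ≤ i) (h2 : i ≤ k) : Has k s (Function.update f i e') (s + k - i) e' :=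
  ⟨i, h1, h2, rfl, by simp⟩

/-- Moving one entry keeps a valid column valid. -/
theorem cond_update {ι : ℕ → ℕ} {n k : ℕ} {s : ℤ} {f : ℕ → ℕ} (h : TabCcond ι n k s f)
    {i e : ℕ} (h1 : 1 ≤ i) (h2 : i ≤ k) (he1 : 1 ≤ f i) (he : 1 ≤ e ∧ e ≤ 2 * n)
    (heb : f 1 = 0 → n + 1 ≤ e) (hl : 1 < i → f (i - 1) < e) (hr : i < k → e < f (i + 1)) :
    TabCcond ι n k s (Function.update f i e) := by
  have hs := cond_step h
  have hs' : ∀ a, 1 ≤ a → a < k →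
      Function.update f i e a < Function.update f i e (a + 1) := by
    intro a ha hak
    by_cases c1 : a = i
    · subst c1
      rw [Function.update_self, Function.update_of_ne (by omega)]
      exact hr hak
    · by_cases c2 : a + 1 = i
      · subst c2
        rw [Function.update_self, Function.update_of_ne (by omega)]
        exact hl (by omega)
      · rw [Function.update_of_ne c1, Function.update_of_ne c2]
        exact hs a ha hak
  rcases h with ⟨a1, a2, a3, a4, a5⟩ | ⟨a0, a1, a2, a3, a4, a5⟩
  · left
    refine ⟨a1, a2, ?_, hs', a5⟩
    intro b hb1 hb2
    by_cases c : b = i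
    · subst c
      rw [Function.update_self]
      exact he
    · rw [Function.update_of_ne c]
      exact a3 b hb1 hb2
  · right
    have hi1 : i ≠ 1 := by
      rintro rfl
      omega
    refine ⟨?_, a1, a2, ?_, fun a ha => hs' a (by omega), a5⟩
    · rw [Function.update_of_ne (by omega)]
      exact a0
    · intro b hb1 hb2
      by_cases c : b = i
      · subst c
        rw [Function.update_self]
        exact ⟨heb a0, he.2⟩
      · rw [Function.update_of_ne c]
        exact a3 b hb1 hb2

/-- Weight used in the induction. -/
def mu (n k : ℕ) (f : ℕ → ℕ) : ℕ := ∑ i ∈ Finset.Icc 1 k, (f i + min (f i) n)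

theorem mu_update {n k : ℕ} {f : ℕ → ℕ} {i : ℕ} (h1 : 1 ≤ i) (h2 : i ≤ k)
    (e : ℕ) : mu n k (Function.update f i e) + (f i + min (f i) n) =
      mu n k f + (e + min e n) := by
  have hi : i ∈ Finset.Icc 1 k := Finset.mem_Icc.mpr ⟨h1, h2⟩
  unfold mu
  rw [← Finset.add_sum_erase _ _ hi, ← Finset.add_sum_erase _ (fun i => f i + min (f i) n) hi]
  have : ∑ x ∈ (Finset.Icc 1 k).erase i,
      (Function.update f i e x + min (Function.update f i e x) n) =
      ∑ x ∈ (Finset.Icc 1 k).erase i, (f x + min (f x) n) := by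
    apply Finset.sum_congr rfl
    intro x hx
    rw [Function.update_of_ne (Finset.ne_of_mem_erase hx)]
  rw [this, Function.update_self]
  omega

theorem cond_up {ι : ℕ → ℕ} {n k : ℕ} {s : ℤ} {f : ℕ → ℕ} (h : TabCcond ι n k s f)
    {u : ℤ} {e e' : ℕ} (hH : Has k s f u e) (h1 : 1 ≤ e) (he : e' = e + 1) (h2 : e' ≤ 2 * n)
    (hN : ¬ Has k s f (u - 1) e') :
    ∃ f', TabCcond ι n k s f' ∧
      tab (boxC ι n) s k f' = tab (boxC ι n) s k f - boxC ι n u e + boxC ι n u e' ∧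
      (∀ u' a, u' ≠ u → (Has k s f' u' a ↔ Has k s f u' a)) ∧
      Has k s f' u e' := by
  obtain ⟨i, hi1, hi2, rfl, rfl⟩ := hH
  refine ⟨Function.update f i e', ?_, tab_update hi1 hi2 _, fun u' a hu => Has_update hu,
    Has_update_self hi1 hi2⟩
  apply cond_update h hi1 hi2 h1 ⟨by omega, h2⟩
  · intro h0
    rcases h with ⟨_, _, h3, _, _⟩ | ⟨_, _, _, h3, h4, _⟩
    · have := h3 1 (by omega) (by omega)
      omega
    · have : i ≠ 1 := by
        rintro rfl
        omega
      have := h3 i (by omega) hi2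
      omega
  · intro hi
    have := cond_lt h (i := i - 1) (i' := i) (by omega) (by omega) hi2
    omega
  · intro hi
    have a := cond_step h i hi1 hi
    have b : f (i + 1) ≠ e' := by
      intro hc
      exact hN ⟨i + 1, by omega, by omega, by push_cast; ring, hc⟩
    omega

theorem cond_down {ι : ℕ → ℕ} {n k : ℕ} {s : ℤ} {f : ℕ → ℕ} (h : TabCcond ι n k s f)
    {u : ℤ} {e e' : ℕ} (hH : Has k s f u e') (h1 : 1 ≤ e) (he : e' = e + 1)
    (hb : f 1 = 0 → e ≠ n)
    (hN : ¬ Has k s f (u + 1) e) :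
    ∃ f', TabCcond ι n k s f' ∧
      tab (boxC ι n) s k f' = tab (boxC ι n) s k f - boxC ι n u e' + boxC ι n u e ∧
      (∀ u' a, u' ≠ u → (Has k s f' u' a ↔ Has k s f u' a)) ∧
      Has k s f' u e ∧ mu n k f' < mu n k f ∧ (f 1 ≠ 0 → f' 1 ≠ 0) := by
  obtain ⟨i, hi1, hi2, rfl, hfi⟩ := hH
  have hle := cond_le h i hi1 hi2
  refine ⟨Function.update f i e, ?_, ?_, fun u' a hu => Has_update hu,
    Has_update_self hi1 hi2, ?_, ?_⟩
  · apply cond_update h hi1 hi2 (by omega) ⟨by omega, by omega⟩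
    · intro h0
      have hb' := hb h0
      rcases h with ⟨_, _, h3, _, _⟩ | ⟨_, _, _, h3, h4, _⟩
      · have := h3 1 (by omega) (by omega)
        omega
      · have : i ≠ 1 := by
          rintro rfl
          omega
        have := h3 i (by omega) hi2
        omega
    · intro hi
      have a := cond_lt h (i := i - 1) (i' := i) (by omega) (by omega) hi2
      have b : f (i - 1) ≠ e := by
        intro hc
        exact hN ⟨i - 1, by omega, by omega, by push_cast [Nat.cast_sub hi1]; ring, hc⟩
      omega
    · intro hi
      have a := cond_step h i hi1 hi
      omega
  · rw [tab_update hi1 hi2, hfi]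
  · have := mu_update (n := n) (f := f) hi1 hi2 e
    omega
  · intro h0
    by_cases hi : i = 1
    · subst hi
      rw [Function.update_self]
      omega
    · rw [Function.update_of_ne (by omega)]
      exact h0

/-! ### Validity of positions -/

theorem valid_unbar {ι : ℕ → ℕ} {n k : ℕ} {s : ℤ} {f : ℕ → ℕ} (h : TabCcond ι n k s f)
    {u : ℤ} {e : ℕ} (hH : Has k s f u e) (h1 : 1 ≤ e) (h2 : e ≤ n) :
    1 ≤ u + (PABC ι n e : ℤ) := by
  obtain ⟨i, hi1, hi2, rfl, rfl⟩ := hH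
  rcases h with ⟨a1, a2, a3, a4, a5⟩ | ⟨a0, _, _, a3, a4, _⟩
  · have := strict_of_step a4 1 (i - 1) le_rfl (by omega)
    rw [show 1 + (i - 1) = i by omega] at this
    have := (a3 1 le_rfl a1).1
    rcases Nat.le_total k (f i) with hc | hc
    · have := P_le ι hc h2
      omega
    · have := P_le ι hc (show k ≤ n by omega)
      omega
  · have hne : i ≠ 1 := by
      rintro rfl
      omega
    have := a3 i (by omega) hi2
    omega

theorem valid_bar {ι : ℕ → ℕ} {n k : ℕ} {s : ℤ} {f : ℕ → ℕ} (h : TabCcond ι n k s f)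
    {u : ℤ} {e j : ℕ} (hH : Has k s f u e) (h2 : j < n) :
    1 ≤ u + n - j + (PABC ι n j : ℤ) := by
  obtain ⟨i, hi1, hi2, rfl, _⟩ := hH
  have b := P_le ι (a := j) (b := n) (by omega) le_rfl
  rcases h with ⟨a1, a2, a3, a4, a5⟩ | ⟨a0, _, _, a3, a4, a5⟩
  · have := P_le ι (a := k) (b := n) (by omega) le_rfl
    omega
  · omega

/-! ### Type (b) columns -/

/-- Data of the part of a type (b) column below the extra symbol. -/
def CondB (ι : ℕ → ℕ) (n k : ℕ) (s : ℤ) (g : ℕ → ℕ) : Prop :=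
  k ≤ n ∧ (∀ i, 1 ≤ i → i ≤ k → n + 1 ≤ g i ∧ g i ≤ 2 * n) ∧
  (∀ i, 1 ≤ i → i < k → g i < g (i + 1)) ∧ 1 - (PABC ι n n : ℤ) ≤ s

/-- The form of a type (b) column. -/
noncomputable def TB (ι : ℕ → ℕ) (n k : ℕ) (s : ℤ) (g : ℕ → ℕ) : ℕ → ℚ :=
  boxC ι n (s + k) 0 + tab (boxC ι n) s k g

theorem condB_of {ι : ℕ → ℕ} {n k : ℕ} {s : ℤ} {f : ℕ → ℕ} (h : TabCcond ι n k s f)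
    (h0 : f 1 = 0) : ∃ k' g, CondB ι n k' s g ∧ tab (boxC ι n) s k f = TB ι n k' s g := by
  rcases h with ⟨a1, a2, a3, a4, a5⟩ | ⟨a0, a1, a2, a3, a4, a5⟩
  · have := a3 1 le_rfl a1
    omega
  · obtain ⟨k', rfl⟩ := Nat.exists_eq_add_of_le' a1
    refine ⟨k', fun i => f (i + 1), ⟨by omega, ?_, ?_, a5⟩, ?_⟩
    · intro i h1 h2
      exact a3 (i + 1) (by omega) (by omega)
    · intro i h1 h2
      exact a4 (i + 1) (by omega) (by omega)
    · rw [tab_succ, h0]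
      rfl

theorem TB_mem {ι : ℕ → ℕ} {n k : ℕ} {s : ℤ} {g : ℕ → ℕ} (h : CondB ι n k s g) :
    TB ι n k s g ∈ TabC ι n := by
  obtain ⟨a1, a2, a3, a4⟩ := h
  refine ⟨k + 1, s, fun i => if i ≤ 1 then 0 else g (i - 1), Or.inr ⟨by simp, by omega, by omega,
    ?_, ?_, a4⟩, ?_⟩
  · intro i h1 h2
    simp only [show ¬ i ≤ 1 by omega, if_false]
    exact a2 (i - 1) (by omega) (by omega)
  · intro i h1 h2
    simp only [show ¬ i ≤ 1 by omega, show ¬ i + 1 ≤ 1 by omega, if_false]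
    have := a3 (i - 1) (by omega) (by omega)
    rw [show i - 1 + 1 = i by omega] at this
    exact this
  · rw [tab_succ]
    unfold TB
    congr 1
    apply tab_congr
    intro i h1 h2
    simp only [show ¬ i + 1 ≤ 1 by omega, if_false, Nat.add_sub_cancel]

theorem TB_eval_n {n : ℕ} (hn : 2 ≤ n) {ι : ℕ → ℕ} (hadm : Admissible n ι) {t : ℤ}
    (hv : 1 ≤ t + (PABC ι n n : ℤ)) {k : ℕ} {s : ℤ} {g : ℕ → ℕ} (h : CondB ι n k s g) :
    TB ι n k s g (posc ι n t n) =
      if s + k = t then (if 1 ≤ k ∧ g 1 = n + 1 then -1 else 1) else 0 := by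
  obtain ⟨a1, a2, a3, a4⟩ := h
  unfold TB
  rw [Pi.add_apply, box_zero, Yc_eval hadm (by omega) le_rfl hv le_rfl,
    tab_eval hn hadm (by omega) le_rfl hv]
  · have e1 : Hi k s g t n = 0 := by
      apply Hi_neg
      rintro ⟨i, h1, h2, _, h4⟩
      have := a2 i h1 h2
      omega
    rw [show t - n + n = t by ring, show 2 * n - n = n by omega, show 2 * n + 1 - n = n + 1 by omega,
      show t - 1 - n + n = t - 1 by ring, e1]
    by_cases c1 : s + k = t
    · rw [if_pos ⟨rfl, c1⟩, if_pos c1]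
      by_cases c2 : 1 ≤ k ∧ g 1 = n + 1
      · rw [if_pos c2, Hi_pos]
        · norm_num
        · exact ⟨1, le_rfl, c2.1, by push_cast; linarith, c2.2⟩
      · rw [if_neg c2, Hi_neg]
        · norm_num
        · rintro ⟨i, h1, h2, h3, h4⟩
          apply c2
          have : i = 1 := by omega
          subst this
          exact ⟨h2, h4⟩
    · rw [if_neg (by tauto), if_neg c1, Hi_neg]
      · norm_num
      · rintro ⟨i, h1, h2, h3, h4⟩
        have := strict_of_step a3 1 (i - 1) le_rfl (by omega)
        rw [show 1 + (i - 1) = i by omega] at this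
        have := (a2 1 le_rfl (by omega)).1
        omega
  · intro i h1 h2
    have := a2 i h1 h2
    omega

theorem TB_insert {ι : ℕ → ℕ} {n k : ℕ} (hn : 2 ≤ n) {s : ℤ} {g : ℕ → ℕ}
    (h : CondB ι n k s g) (hg : ¬ (1 ≤ k ∧ g 1 = n + 1)) :
    ∃ g', CondB ι n (k + 1) s g' ∧ TB ι n (k + 1) s g' = TB ι n k s g - Bf ι n (s + k) n := by
  obtain ⟨a1, a2, a3, a4⟩ := h
  refine ⟨fun i => if i ≤ 1 then n + 1 else g (i - 1), ⟨?_, ?_, ?_, a4⟩, ?_⟩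
  · by_cases hk : 1 ≤ k
    · have := strict_of_step a3 1 (k - 1) le_rfl (by omega)
      rw [show 1 + (k - 1) = k by omega] at this
      have := a2 1 le_rfl hk
      have := a2 k hk le_rfl
      have : g 1 ≠ n + 1 := fun hc => hg ⟨hk, hc⟩
      omega
    · omega
  · intro i h1 h2
    by_cases hi : i ≤ 1
    · simp only [hi, if_true]
      omega
    · simp only [hi, if_false]
      exact a2 (i - 1) (by omega) (by omega)
  · intro i h1 h2
    by_cases hi : i ≤ 1
    · simp only [hi, show ¬ i + 1 ≤ 1 by omega, if_true, if_false, Nat.add_sub_cancel]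
      have : i = 1 := by omega
      subst this
      have := a2 1 le_rfl (by omega)
      have : g 1 ≠ n + 1 := fun hc => hg ⟨by omega, hc⟩
      omega
    · simp only [hi, show ¬ i + 1 ≤ 1 by omega, if_false, Nat.add_sub_cancel]
      have := a3 (i - 1) (by omega) (by omega)
      rw [show i - 1 + 1 = i by omega] at this
      exact this
  · unfold TB
    rw [tab_succ]
    have e : tab (boxC ι n) s k (fun i => if i + 1 ≤ 1 then n + 1 else g (i + 1 - 1))
        = tab (boxC ι n) s k g := by
      apply tab_congr
      intro i h1 h2
      simp only [show ¬ i + 1 ≤ 1 by omega, if_false, Nat.add_sub_cancel]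
    rw [e]
    simp only [le_refl, if_true]
    rw [← add_assoc]
    push_cast
    rw [show s + ((k : ℤ) + 1) = s + k + 1 by ring, box_diff_zero]
    abel

theorem TB_delete {ι : ℕ → ℕ} {n k : ℕ} {s : ℤ} {g : ℕ → ℕ}
    (h : CondB ι n (k + 1) s g) (hg : g 1 = n + 1) :
    ∃ g', CondB ι n k s g' ∧ TB ι n k s g' = TB ι n (k + 1) s g + Bf ι n (s + k) n ∧
      ¬ (1 ≤ k ∧ g' 1 = n + 1) := by
  obtain ⟨a1, a2, a3, a4⟩ := h
  refine ⟨fun i => g (i + 1), ⟨by omega, ?_, ?_, a4⟩, ?_, ?_⟩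
  · intro i h1 h2
    exact a2 (i + 1) (by omega) (by omega)
  · intro i h1 h2
    exact a3 (i + 1) (by omega) (by omega)
  · unfold TB
    rw [tab_succ, hg, ← add_assoc]
    push_cast
    rw [show s + ((k : ℤ) + 1) = s + k + 1 by ring, box_diff_zero]
    abel
  · rintro ⟨h1, h2⟩
    have := a3 1 le_rfl (by omega)
    simp only at h2
    omega


/-! ### Closure of the tableaux under the operators -/

theorem closure_lt {n : ℕ} (hn : 2 ≤ n) {ι : ℕ → ℕ} (hadm : Admissible n ι)
    (hadap : Adapted n (cartanC n) ι) {k : ℕ} {s : ℤ} {f : ℕ → ℕ} (h : TabCcond ι n k s f)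
    {t : ℤ} {j : ℕ} (h1 : 1 ≤ j) (h2 : j < n) (hv : 1 ≤ t + (PABC ι n j : ℤ)) :
    Sop (cartanC n) ι (posc ι n t j) (tab (boxC ι n) s k f) ∈ TabC ι n := by
  have hself : tab (boxC ι n) s k f ∈ TabC ι n := ⟨k, s, f, h, rfl⟩
  have ev := tab_eval hn hadm h1 h2.le hv k s f
    (fun i hi1 hi2 => ⟨cond_le h i hi1 hi2, fun _ => h2⟩)
  -- single moves
  have Uup : ∀ f', TabCcond ι n k s f' → Has k s f' t j → ¬ Has k s f' (t - 1) (j + 1) →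
      ∃ f'', TabCcond ι n k s f'' ∧
        tab (boxC ι n) s k f'' = tab (boxC ι n) s k f' - Bf ι n t j := by
    intro f' hf' a b
    obtain ⟨f'', c1, c2, -, -⟩ := cond_up hf' a h1 rfl (by omega) b
    refine ⟨f'', c1, ?_⟩
    rw [c2, box_diff ι t h1 h2]
    abel
  have Udown : ∀ f', TabCcond ι n k s f' → ¬ Has k s f' t j → Has k s f' (t - 1) (j + 1) →
      ∃ f'', TabCcond ι n k s f'' ∧
        tab (boxC ι n) s k f'' = tab (boxC ι n) s k f' + Bf ι n (t - 1) j := by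
    intro f' hf' a b
    obtain ⟨f'', c1, c2, -⟩ := cond_down hf' b h1 rfl (fun _ => by omega)
      (by rwa [show t - 1 + 1 = t by ring])
    refine ⟨f'', c1, ?_⟩
    rw [c2, box_diff ι (t - 1) h1 h2]
    abel
  have Vup : ∀ f', TabCcond ι n k s f' → Has k s f' (t - n + j) (2 * n - j) →
      ¬ Has k s f' (t - 1 - n + j) (2 * n + 1 - j) →
      ∃ f'', TabCcond ι n k s f'' ∧
        tab (boxC ι n) s k f'' = tab (boxC ι n) s k f' - Bf ι n t j ∧
        (∀ u' a, u' ≠ t - n + j → (Has k s f'' u' a ↔ Has k s f' u' a)) ∧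
        Has k s f'' (t - n + j) (2 * n + 1 - j) := by
    intro f' hf' a b
    obtain ⟨f'', c1, c2, c3, c4⟩ := cond_up hf' a (by omega) (e' := 2 * n + 1 - j) (by omega)
      (by omega) (by rwa [show t - n + j - 1 = t - 1 - n + j by ring])
    refine ⟨f'', c1, ?_, c3, c4⟩
    rw [c2, box_diff_bar ι _ h1 h2, show t - n + j + n - j = t by ring]
    abel
  have Vdown : ∀ f', TabCcond ι n k s f' → ¬ Has k s f' (t - n + j) (2 * n - j) →
      Has k s f' (t - 1 - n + j) (2 * n + 1 - j) →
      ∃ f'', TabCcond ι n k s f'' ∧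
        tab (boxC ι n) s k f'' = tab (boxC ι n) s k f' + Bf ι n (t - 1) j ∧
        (∀ u' a, u' ≠ t - 1 - n + j → (Has k s f'' u' a ↔ Has k s f' u' a)) := by
    intro f' hf' a b
    obtain ⟨f'', c1, c2, c3, -⟩ := cond_down hf' b (e := 2 * n - j) (by omega) (by omega)
      (fun _ => by omega) (by rwa [show t - 1 - n + j + 1 = t - n + j by ring])
    refine ⟨f'', c1, ?_, c3⟩
    rw [c2, box_diff_bar ι _ h1 h2, show t - 1 - n + j + n - j = t - 1 by ring]
    abel
  have hx : (Has k s f t j ∧ ¬ Has k s f (t - 1) (j + 1) ∧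
        Hi k s f t j - Hi k s f (t - 1) (j + 1) = 1) ∨
      Hi k s f t j - Hi k s f (t - 1) (j + 1) = 0 ∨
      (¬ Has k s f t j ∧ Has k s f (t - 1) (j + 1) ∧
        Hi k s f t j - Hi k s f (t - 1) (j + 1) = -1) := by
    rcases Hi_cases k s f t j with ⟨a, b⟩ | ⟨a, b⟩ <;>
    rcases Hi_cases k s f (t - 1) (j + 1) with ⟨c, d⟩ | ⟨c, d⟩ <;> rw [b, d] <;>
    simp [a, c]
  have hy : (Has k s f (t - n + j) (2 * n - j) ∧ ¬ Has k s f (t - 1 - n + j) (2 * n + 1 - j) ∧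
        Hi k s f (t - n + j) (2 * n - j) - Hi k s f (t - 1 - n + j) (2 * n + 1 - j) = 1) ∨
      Hi k s f (t - n + j) (2 * n - j) - Hi k s f (t - 1 - n + j) (2 * n + 1 - j) = 0 ∨
      (¬ Has k s f (t - n + j) (2 * n - j) ∧ Has k s f (t - 1 - n + j) (2 * n + 1 - j) ∧
        Hi k s f (t - n + j) (2 * n - j) - Hi k s f (t - 1 - n + j) (2 * n + 1 - j) = -1) := by
    rcases Hi_cases k s f (t - n + j) (2 * n - j) with ⟨a, b⟩ | ⟨a, b⟩ <;>
    rcases Hi_cases k s f (t - 1 - n + j) (2 * n + 1 - j) with ⟨c, d⟩ | ⟨c, d⟩ <;> rw [b, d] <;>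
    simp [a, c]
  rcases hx with ⟨x1, x2, x3⟩ | x3 | ⟨x1, x2, x3⟩ <;> rcases hy with ⟨y1, y2, y3⟩ | y3 | ⟨y1, y2, y3⟩
  · -- both up
    rw [Sop_pos hn hadm hadap h1 h2.le hv (c := 2) (by rw [ev]; linarith) (by norm_num)]
    obtain ⟨f', c1, c2, c3, c4⟩ := Vup f h y1 y2
    have hA : Has k s f' t j := (c3 _ _ (by omega)).mpr x1
    have hB : ¬ Has k s f' (t - 1) (j + 1) := by
      intro hh
      by_cases hj : t - 1 = t - n + j
      · rw [hj] at hh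
        have := Has_unique hh c4
        omega
      · exact x2 ((c3 _ _ hj).mp hh)
    obtain ⟨f'', e1, e2⟩ := Uup f' c1 hA hB
    refine ⟨k, s, f'', e1, ?_⟩
    rw [e2, c2, two_smul]
    abel
  · rw [Sop_pos hn hadm hadap h1 h2.le hv (c := 1) (by rw [ev]; linarith) (by norm_num)]
    obtain ⟨f', c1, c2⟩ := Uup f h x1 x2
    exact ⟨k, s, f', c1, by rw [c2, one_smul]⟩
  · rw [Sop_zero (by rw [ev]; linarith)]
    exact hself
  · rw [Sop_pos hn hadm hadap h1 h2.le hv (c := 1) (by rw [ev]; linarith) (by norm_num)]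
    obtain ⟨f', c1, c2, -⟩ := Vup f h y1 y2
    exact ⟨k, s, f', c1, by rw [c2, one_smul]⟩
  · rw [Sop_zero (by rw [ev]; linarith)]
    exact hself
  · rcases Sop_neg hn hadm hadap h1 h2.le hv (φ := tab (boxC ι n) s k f) (c := -1)
      (by rw [ev]; linarith) (by norm_num) with hS | hS
    · rw [hS]
      exact hself
    · rw [hS]
      obtain ⟨f', c1, c2, -⟩ := Vdown f h y1 y2
      exact ⟨k, s, f', c1, by rw [c2, neg_one_smul]; abel⟩
  · rw [Sop_zero (by rw [ev]; linarith)]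
    exact hself
  · rcases Sop_neg hn hadm hadap h1 h2.le hv (φ := tab (boxC ι n) s k f) (c := -1)
      (by rw [ev]; linarith) (by norm_num) with hS | hS
    · rw [hS]
      exact hself
    · rw [hS]
      obtain ⟨f', c1, c2⟩ := Udown f h x1 x2
      exact ⟨k, s, f', c1, by rw [c2, neg_one_smul]; abel⟩
  · rcases Sop_neg hn hadm hadap h1 h2.le hv (φ := tab (boxC ι n) s k f) (c := -2)
      (by rw [ev]; linarith) (by norm_num) with hS | hS
    · rw [hS]
      exact hself
    · rw [hS]
      obtain ⟨f', c1, c2, c3⟩ := Vdown f h y1 y2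
      obtain ⟨f'', e1, e2⟩ := Udown f' c1 (fun hh => x1 ((c3 _ _ (by omega)).mp hh))
        ((c3 _ _ (by omega)).mpr x2)
      refine ⟨k, s, f'', e1, ?_⟩
      rw [e2, c2, neg_smul, two_smul]
      abel

theorem closure_n {n : ℕ} (hn : 2 ≤ n) {ι : ℕ → ℕ} (hadm : Admissible n ι)
    (hadap : Adapted n (cartanC n) ι) {k : ℕ} {s : ℤ} {f : ℕ → ℕ} (h : TabCcond ι n k s f)
    {t : ℤ} (hv : 1 ≤ t + (PABC ι n n : ℤ)) :
    Sop (cartanC n) ι (posc ι n t n) (tab (boxC ι n) s k f) ∈ TabC ι n := by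
  have hself : tab (boxC ι n) s k f ∈ TabC ι n := ⟨k, s, f, h, rfl⟩
  by_cases h0 : f 1 = 0
  · obtain ⟨k', g, hg, hT⟩ := condB_of h h0
    rw [hT] at hself ⊢
    have ev := TB_eval_n hn hadm hv hg
    by_cases c1 : s + k' = t
    · rw [if_pos c1] at ev
      by_cases c2 : 1 ≤ k' ∧ g 1 = n + 1
      · rw [if_pos c2] at ev
        obtain ⟨k'', rfl⟩ := Nat.exists_eq_add_of_le' c2.1
        rcases Sop_neg hn hadm hadap (by omega) le_rfl hv ev (by norm_num) with hS | hS
        · rw [hS]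
          exact hself
        · rw [hS]
          obtain ⟨g', d1, d2, -⟩ := TB_delete hg c2.2
          have := TB_mem d1
          rw [d2] at this
          rw [neg_one_smul, sub_neg_eq_add, show t - 1 = s + k'' by push_cast at c1; linarith]
          exact this
      · rw [if_neg c2] at ev
        rw [Sop_pos hn hadm hadap (by omega) le_rfl hv ev (by norm_num)]
        obtain ⟨g', d1, d2⟩ := TB_insert hn hg c2
        have := TB_mem d1
        rw [d2, c1] at this
        rw [one_smul]
        exact this
    · rw [if_neg c1] at ev
      rw [Sop_zero ev]
      exact hself
  · have ev := tab_eval hn hadm (by omega) le_rfl hv k s f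
      (fun i hi1 hi2 => ⟨cond_le h i hi1 hi2, fun hz => by
        have := cond_ge h h0 i hi1 hi2
        omega⟩)
    rw [show t - n + n = t by ring, show 2 * n - n = n by omega,
      show 2 * n + 1 - n = n + 1 by omega, show t - 1 - n + n = t - 1 by ring] at ev
    rcases Hi_cases k s f t n with ⟨a, b⟩ | ⟨a, b⟩ <;>
    rcases Hi_cases k s f (t - 1) (n + 1) with ⟨c, d⟩ | ⟨c, d⟩ <;> rw [b, d] at ev <;>
    norm_num at ev
    · rw [Sop_zero ev]
      exact hself
    · rw [Sop_pos hn hadm hadap (by omega) le_rfl hv ev (by norm_num)]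
      obtain ⟨f', c1, c2, -⟩ := cond_up h a (by omega) rfl (by omega) c
      refine ⟨k, s, f', c1, ?_⟩
      rw [c2, box_diff_n ι hn]
      abel
    · rcases Sop_neg hn hadm hadap (by omega) le_rfl hv ev (by norm_num) with hS | hS
      · rw [hS]
        exact hself
      · rw [hS]
        obtain ⟨f', c1, c2, -⟩ := cond_down h c (by omega) rfl (fun hz => absurd hz h0)
          (by rwa [show t - 1 + 1 = t by ring])
        refine ⟨k, s, f', c1, ?_⟩
        rw [c2, box_diff_n ι hn, neg_smul]
        abel
    · rw [Sop_zero ev]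
      exact hself

theorem Xi_sub {n : ℕ} (hn : 2 ≤ n) {ι : ℕ → ℕ} (hadm : Admissible n ι)
    (hadap : Adapted n (cartanC n) ι) {φ : ℕ → ℚ} (hφ : XiMem (cartanC n) ι φ) :
    φ ∈ TabC ι n := by
  induction hφ with
  | base p hp =>
    obtain ⟨t, j, h1, h2, hv, rfl⟩ := posc_surj hadm hp
    rw [xc_posc h1 h2 hv]
    rcases Nat.lt_or_ge j n with hj | hj
    · refine ⟨j, t, fun i => i, Or.inl ⟨h1, by omega, ?_, ?_, by omega⟩, (tab_id ι t j hj).symm⟩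
      · intro i _ _
        simp only
        omega
      · intro i _ _
        simp
    · have : j = n := by omega
      subst this
      refine ⟨1, t, fun _ => 0, Or.inr ⟨rfl, le_rfl, by omega, ?_, ?_, by omega⟩, ?_⟩
      · intro i _ _
        omega
      · intro i _ _
        omega
      · simp [tab, box_zero]
  | step p hp φ _ ih =>
    obtain ⟨t, j, h1, h2, hv, rfl⟩ := posc_surj hadm hp
    obtain ⟨k, s, f, hc, rfl⟩ := ih
    rcases Nat.lt_or_ge j n with hj | hj
    · exact closure_lt hn hadm hadap hc h1 hj hv
    · have : j = n := by omega
      subst this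
      exact closure_n hn hadm hadap hc hv


/-! ### Reaching every tableau -/

theorem Xi_step {n : ℕ} (hn : 2 ≤ n) {ι : ℕ → ℕ} (hadm : Admissible n ι)
    (hadap : Adapted n (cartanC n) ι) {t : ℤ} {j : ℕ}
    (h1 : 1 ≤ j) (h2 : j ≤ n) (hv : 1 ≤ t + (PABC ι n j : ℤ)) {φ ψ : ℕ → ℚ} {c : ℚ}
    (hφ : XiMem (cartanC n) ι φ)
    (hc : φ (posc ι n t j) = c) (hc0 : 0 < c) (hψ : ψ = φ - c • Bf ι n t j) :
    XiMem (cartanC n) ι ψ := by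
  have := XiMem.step (posc ι n t j) (posc_pos hadm h1 h2 hv) φ hφ
  rw [Sop_pos hn hadm hadap h1 h2 hv hc hc0] at this
  rw [hψ]
  exact this

theorem reachB {n : ℕ} (hn : 2 ≤ n) {ι : ℕ → ℕ} (hadm : Admissible n ι)
    (hadap : Adapted n (cartanC n) ι) (s : ℤ) (k : ℕ) :
    ∀ g, CondB ι n k s g → XiMem (cartanC n) ι (TB ι n k s g) := by
  induction k with
  | zero =>
    intro g hg
    have hv : 1 ≤ s + (PABC ι n n : ℤ) := by
      have := hg.2.2.2
      omega
    have e : TB ι n 0 s g = xc (posc ι n s n) := by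
      rw [xc_posc (by omega) le_rfl hv]
      simp [TB, tab, box_zero]
    rw [e]
    exact XiMem.base _ (posc_pos hadm (by omega) le_rfl hv)
  | succ k ih =>
    have key : ∀ d g, CondB ι n (k + 1) s g → g 1 = n + 1 + d →
        XiMem (cartanC n) ι (TB ι n (k + 1) s g) := by
      intro d
      induction d with
      | zero =>
        intro g hg hg1
        obtain ⟨g', d1, d2, d3⟩ := TB_delete hg hg1
        have hv : 1 ≤ s + k + (PABC ι n n : ℤ) := by
          have := hg.2.2.2
          omega
        have ev := TB_eval_n hn hadm hv d1
        rw [if_pos rfl, if_neg d3] at ev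
        refine Xi_step hn hadm hadap (by omega) le_rfl hv (ih g' d1) ev (by norm_num) ?_
        rw [d2, one_smul]
        abel
      | succ d ihd =>
        intro g hg hg1
        obtain ⟨a1, a2, a3, a4⟩ := hg
        have b1 := a2 1 le_rfl (by omega)
        have hg' : CondB ι n (k + 1) s (Function.update g 1 (n + 1 + d)) := by
          refine ⟨a1, ?_, ?_, a4⟩
          · intro i hi1 hi2
            by_cases c : i = 1
            · subst c
              rw [Function.update_self]
              omega
            · rw [Function.update_of_ne c]
              exact a2 i hi1 hi2
          · intro i hi1 hi2
            have := a3 i hi1 hi2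
            rw [Function.update_of_ne (show i + 1 ≠ 1 by omega)]
            by_cases c : i = 1
            · subst c
              rw [Function.update_self]
              omega
            · rw [Function.update_of_ne c]
              exact this
        have IH := ihd _ hg' (by simp)
        -- the letter
        obtain ⟨m, hm⟩ : ∃ m, 2 * n - m = n + 1 + d ∧ 1 ≤ m ∧ m < n :=
          ⟨n - 1 - d, by omega, by omega, by omega⟩
        obtain ⟨hm1, hm2, hm3⟩ := hm
        have hv : 1 ≤ (s + k + n - m) + (PABC ι n m : ℤ) := by
          have := P_le ι (a := m) (b := n) (by omega) le_rfl
          omega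
        have ev : TB ι n (k + 1) s (Function.update g 1 (n + 1 + d))
            (posc ι n (s + k + n - m) m) = 1 := by
          unfold TB
          rw [Pi.add_apply, box_zero, Yc_eval hadm hm2 (by omega) hv le_rfl,
            if_neg (by omega), tab_eval hn hadm hm2 (by omega) hv]
          · rw [Hi_neg, Hi_neg, Hi_pos, Hi_neg]
            · norm_num
            · rintro ⟨i, hi1, hi2, hi3, hi4⟩
              have : i ≠ 1 := by
                rintro rfl
                rw [Function.update_self] at hi4
                omega
              rw [Function.update_of_ne this] at hi4
              have := strict_of_step a3 1 (i - 1) le_rfl (by omega)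
              rw [show 1 + (i - 1) = i by omega] at this
              omega
            · refine ⟨1, le_rfl, by omega, by push_cast; ring, ?_⟩
              rw [Function.update_self]
              omega
            · rintro ⟨i, hi1, hi2, hi3, hi4⟩
              have := hg'.2.1 i hi1 hi2
              omega
            · rintro ⟨i, hi1, hi2, hi3, hi4⟩
              have := hg'.2.1 i hi1 hi2
              omega
          · intro i hi1 hi2
            have := hg'.2.1 i hi1 hi2
            omega
        refine Xi_step hn hadm hadap hm2 (by omega) hv IH ev (by norm_num) ?_
        unfold TB
        have bd := box_diff_bar ι (n := n) (s + k) hm2 hm3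
        rw [show 2 * n + 1 - m = n + 1 + (d + 1) by omega, hm1] at bd
        rw [tab_update le_rfl (by omega), hg1,
          show s + ((k + 1 : ℕ) : ℤ) - ((1 : ℕ) : ℤ) = s + k by push_cast; ring, bd, one_smul]
        abel
    intro g hg
    have := hg.2.1 1 le_rfl (by omega)
    exact key (g 1 - (n + 1)) g hg (by omega)

theorem reachA {n : ℕ} (hn : 2 ≤ n) {ι : ℕ → ℕ} (hadm : Admissible n ι)
    (hadap : Adapted n (cartanC n) ι) (s : ℤ) (k : ℕ) (N : ℕ) :
    ∀ f, mu n k f = N → TabCcond ι n k s f → f 1 ≠ 0 →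
      XiMem (cartanC n) ι (tab (boxC ι n) s k f) := by
  induction N using Nat.strong_induction_on with
  | _ N ih =>
  intro f hmu h h0
  have hA : 1 ≤ k ∧ k ≤ n - 1 ∧ 1 - (PABC ι n k : ℤ) ≤ s := by
    rcases h with ⟨a1, a2, a3, a4, a5⟩ | ⟨a0, _⟩
    · exact ⟨a1, a2, a5⟩
    · exact absurd a0 h0
  obtain ⟨hk1, hk2, hs⟩ := hA
  have hpos := cond_ge h h0
  have hle := cond_le h
  by_cases hid : ∀ i, 1 ≤ i → i ≤ k → f i = i
  · have hv : 1 ≤ s + (PABC ι n k : ℤ) := by omega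
    have e : tab (boxC ι n) s k f = xc (posc ι n s k) := by
      rw [xc_posc hk1 (by omega) hv, ← tab_id ι s k (by omega)]
      exact tab_congr _ _ _ _ _ hid
    rw [e]
    exact XiMem.base _ (posc_pos hadm hk1 (by omega) hv)
  push Not at hid
  -- the first position not carrying its own index
  obtain ⟨i, ⟨hi1, hi2, hi3⟩, hmin⟩ :
      ∃ i, (1 ≤ i ∧ i ≤ k ∧ f i ≠ i) ∧ ∀ a, 1 ≤ a → a < i → f a = a := by
    classical
    refine ⟨Nat.find hid, Nat.find_spec hid, ?_⟩
    intro a ha1 ha2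
    have := Nat.find_min hid ha2
    have hk := (Nat.find_spec hid).2.1
    by_contra hc
    exact this ⟨ha1, by omega, hc⟩
  have hgt : i < f i := by
    have := strict_of_step (cond_step h) 1 (i - 1) le_rfl (by omega)
    rw [show 1 + (i - 1) = i by omega] at this
    have := hpos 1 le_rfl hk1
    omega
  obtain ⟨e, he⟩ : ∃ e, f i = e + 1 := ⟨f i - 1, by omega⟩
  have hfle := hle i hi1 hi2
  set u : ℤ := s + k - i with hu
  have hHas : Has k s f u (e + 1) := ⟨i, hi1, hi2, hu.symm, he⟩
  have hNo : ¬ Has k s f (u + 1) e := by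
    rintro ⟨a, ha1, ha2, ha3, ha4⟩
    have := hmin a ha1 (by omega)
    omega
  have evf : ∀ f', TabCcond ι n k s f' → f' 1 ≠ 0 → ∀ j : ℕ, ∀ i, 1 ≤ i → i ≤ k →
      f' i ≤ 2 * n ∧ (f' i = 0 → j < n) := by
    intro f' hf' hf0 j i hi1 hi2
    refine ⟨cond_le hf' i hi1 hi2, fun hz => ?_⟩
    have := cond_ge hf' hf0 i hi1 hi2
    omega
  rcases Nat.lt_trichotomy e n with hen | hen | hen
  · -- unbarred entry
    have hmove : Hi k s f (u - n + e) (2 * n - e) = Hi k s f (u - 1 - n + e) (2 * n + 1 - e) →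
        XiMem (cartanC n) ι (tab (boxC ι n) s k f) := by
      intro heq
      obtain ⟨f', c1, c2, c3, c4, c5, c6⟩ := cond_down h hHas (by omega) rfl
        (fun hz => absurd hz h0) hNo
      have hv := valid_unbar c1 c4 (by omega) hen.le
      have ev := tab_eval (j := e) hn hadm (by omega) hen.le hv k s f' (evf f' c1 (c6 h0) _)
      have tr : ∀ u' a, u' ≠ u → Hi k s f' u' a = Hi k s f u' a := by
        intro u' a hne
        by_cases hh : Has k s f u' a
        · rw [Hi_pos hh, Hi_pos ((c3 _ _ hne).mpr hh)]
        · rw [Hi_neg hh, Hi_neg (fun h' => hh ((c3 _ _ hne).mp h'))]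
      rw [Hi_pos c4, Hi_neg (fun hh => by
          have := Has_order h hHas ((c3 _ _ (by omega)).mp hh) (by omega)
          omega), tr (u - n + e) _ (by omega), tr (u - 1 - n + e) _ (by omega), heq] at ev
      refine Xi_step (c := 1) hn hadm hadap (by omega) hen.le hv (ih _ (by omega) f' rfl c1 (c6 h0))
        (by rw [ev]; ring) (by norm_num) ?_
      rw [c2, box_diff ι u (by omega) hen, one_smul]
      abel
    by_cases cA : Has k s f (u - n + e) (2 * n - e)
    · by_cases cB : Has k s f (u - 1 - n + e) (2 * n + 1 - e)
      · exact hmove (by rw [Hi_pos cA, Hi_pos cB])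
      · -- replace the pair
        obtain ⟨b, hb1, hb2, hb3, hb4⟩ := cA
        have hib : i < b := by omega
        have st := cond_step h
        have v1 : TabCcond ι n k s (Function.update f i e) := by
          apply cond_update h hi1 hi2 (by omega) ⟨by omega, by omega⟩ (fun hz => absurd hz h0)
          · intro hi
            have := hmin (i - 1) (by omega) (by omega)
            omega
          · intro hi
            have := st i hi1 hi
            omega
        have n1 : Function.update f i e 1 ≠ 0 := by
          have := cond_ge h h0 1 le_rfl hk1
          by_cases hc : i = 1
          · subst hc
            rw [Function.update_self]
            omega
          · rw [Function.update_of_ne (by omega)]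
            exact h0
        have eb : Function.update f i e b = 2 * n - e := by
          rw [Function.update_of_ne (by omega)]
          exact hb4
        have v2 : TabCcond ι n k s
            (Function.update (Function.update f i e) b (2 * n + 1 - e)) := by
          apply cond_update v1 hb1 hb2 (by omega) ⟨by omega, by omega⟩ (fun hz => absurd hz n1)
          · intro _
            have := cond_step v1 (b - 1) (by omega) (by omega)
            rw [show b - 1 + 1 = b by omega, eb] at this
            omega
          · intro hbk
            rw [Function.update_of_ne (by omega)]
            have := st b hb1 hbk
            by_contra hc
            exact cB ⟨b + 1, by omega, by omega, by push_cast; omega, by omega⟩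
        have m1 := mu_update (n := n) (f := f) hi1 hi2 e
        have m2 := mu_update (n := n) (f := Function.update f i e) hb1 hb2 (2 * n + 1 - e)
        rw [he] at m1
        rw [eb] at m2
        have n2 : Function.update (Function.update f i e) b (2 * n + 1 - e) 1 ≠ 0 := by
          rw [Function.update_of_ne (by omega)]
          exact n1
        have fin := ih _ (by omega) _ rfl v2 n2
        rw [tab_update hb1 hb2, tab_update hi1 hi2, eb, he, hb3, ← hu,
          box_diff ι u (by omega) hen, box_diff_bar ι (n := n) _ (by omega) hen,
          show u - n + e + n - e = u by ring] at fin
        convert fin using 1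
        abel
    · by_cases cB : Has k s f (u - 1 - n + e) (2 * n + 1 - e)
      · obtain ⟨f', c1, c2, c3, c4, c5, c6⟩ := cond_down (e := 2 * n - e) h cB (by omega)
          (by omega) (fun hz => absurd hz h0)
          (by rw [show u - 1 - n + e + 1 = u - n + e by ring]; exact cA)
        have hv := valid_bar c1 c4 hen
        have hH' := (c3 _ _ (by omega)).mpr hHas
        rw [show u - 1 - n + e + n - e = u - 1 by ring] at hv
        have ev := tab_eval (j := e) hn hadm (by omega) hen.le hv k s f' (evf f' c1 (c6 h0) _)
        rw [Hi_neg (fun hh => by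
            have := Has_order c1 hH' hh (by omega)
            omega), Hi_neg (fun hh => by
            have := Has_order c1 hH' hh (by omega)
            omega), Hi_pos c4, Hi_neg (fun hh => by
            have := Has_order h cB ((c3 _ _ (by omega)).mp hh) (by omega)
            omega)] at ev
        refine Xi_step hn hadm hadap (by omega) hen.le hv (ih _ (by omega) f' rfl c1 (c6 h0)) ev
          (by norm_num) ?_
        have bd := box_diff_bar ι (n := n) (u - 1 - n + e) (by omega) hen
        rw [show u - 1 - n + e + n - e = u - 1 by ring] at bd
        rw [c2, bd]
        norm_num
        abel
      · exact hmove (by rw [Hi_neg cA, Hi_neg cB])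
  · -- the entry `n̄`
    subst hen
    obtain ⟨f', c1, c2, c3, c4, c5, c6⟩ := cond_down h hHas (by omega) rfl
      (fun hz => absurd hz h0) hNo
    have hv := valid_unbar c1 c4 (by omega) le_rfl
    have ev := tab_eval (j := e) hn hadm (by omega) le_rfl hv k s f' (evf f' c1 (c6 h0) _)
    rw [show u - e + e = u by ring, show 2 * e - e = e by omega,
      show 2 * e + 1 - e = e + 1 by omega, show u - 1 - e + e = u - 1 by ring, Hi_pos c4,
      Hi_neg (fun hh => by
        have := Has_order h hHas ((c3 _ _ (by omega)).mp hh) (by omega)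
        omega)] at ev
    refine Xi_step hn hadm hadap (by omega) le_rfl hv (ih _ (by omega) f' rfl c1 (c6 h0)) ev
      (by norm_num) ?_
    rw [c2, box_diff_n ι hn]
    norm_num
    abel
  · -- barred entry
    obtain ⟨f', c1, c2, c3, c4, c5, c6⟩ := cond_down h hHas (by omega) rfl
      (fun hz => absurd hz h0) hNo
    obtain ⟨m, hm1, hm2, hm3⟩ : ∃ m, e = 2 * n - m ∧ 1 ≤ m ∧ m < n :=
      ⟨2 * n - e, by omega, by omega, by omega⟩
    have hv := valid_bar c1 c4 hm3
    have ev := tab_eval (j := m) hn hadm hm2 hm3.le hv k s f' (evf f' c1 (c6 h0) _)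
    have bd := box_diff_bar ι (n := n) u hm2 hm3
    rw [show 2 * n + 1 - m = e + 1 by omega, ← hm1] at bd
    rw [show 2 * n + 1 - m = e + 1 by omega, ← hm1, show u + n - m - n + m = u by ring,
      Hi_pos c4] at ev
    rw [Hi_neg (fun hh => by
      obtain ⟨a, ha1, ha2, ha3, ha4⟩ := (c3 _ _ (by omega)).mp hh
      have := hmin a ha1 (by omega)
      omega)] at ev
    rw [Hi_neg (fun hh => by
      by_cases hc : u + n - m - 1 = u
      · rw [hc] at hh
        have := Has_unique hh c4
        omega
      · obtain ⟨a, ha1, ha2, ha3, ha4⟩ := (c3 _ _ hc).mp hh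
        have := hmin a ha1 (by omega)
        omega)] at ev
    rw [Hi_neg (fun hh => by
      have := Has_order h hHas ((c3 _ _ (by omega)).mp hh) (by omega)
      omega)] at ev
    refine Xi_step hn hadm hadap hm2 hm3.le hv (ih _ (by omega) f' rfl c1 (c6 h0)) ev
      (by norm_num) ?_
    rw [c2, bd]
    norm_num
    abel

/-- Theorem 3.5 (type C): for an adapted sequence, `Ξ_ι = Tab_{C,ι}`. -/
theorem XiEqTabC (n : ℕ) (hn : 2 ≤ n) (ι : ℕ → ℕ)
    (hadm : Admissible n ι) (hadap : Adapted n (cartanC n) ι) :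
    Xi (cartanC n) ι = TabC ι n := by
  ext φ
  constructor
  · intro h
    exact Xi_sub hn hadm hadap h
  · rintro ⟨k, s, f, hc, rfl⟩
    by_cases h0 : f 1 = 0
    · obtain ⟨k', g, hg, e⟩ := condB_of hc h0
      rw [e]
      exact reachB hn hadm hadap s k' g hg
    · exact reachA hn hadm hadap s k _ f rfl hc h0
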